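/- arXiv:1905.00244 — 3 statements merged into one kernel-verified Lean document; each statement's English description precedes it below -/
import Mathlib

section
/- Let p ≡ 3 (mod 4) and ℓ be primes with p > 4ℓ². Suppose s ∈ ℍ[ℚ,−1,−p] satisfies ℓ·s ∈ O, s² = −p, and s ∉ {j, −j, k, −k}. Then ℓ ≡ 1 (mod 4) and s = (x·j + y·k)/ℓ for some integers x, y with ℓ ∤ x and x² + y² = ℓ². -/
/-!
Write `s = t + u·i + v·j + w·k`. Comparing coordinates in `s² = -p` forces `t = 0`, so
`u² + p·v² + p·w² = p`. Since `ℓ·s ∈ O`, this becomes an integral equation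
`E² + p·(4A² + D²) = 4·p·ℓ²` with `E = 2ℓu`, hence `p ∣ E`; as `E² ≤ 4pℓ² < p²`, `E = 0`
(`eq_zero_of_sq_add_mul_eq`). So `ℓ·s = x·j + y·k` with `x, y` integers and `x² + y² = ℓ²`.

If `ℓ ∣ x`, then `|x| ≤ ℓ` gives `x ∈ {0, ±ℓ}`, i.e. `s ∈ {±j, ±k}`, which is excluded. Once
`ℓ ∤ x`, the relation `x² + y² = ℓ²` exhibits `-1` as a square modulo `ℓ` (and is impossible
modulo `4` for `ℓ = 2`), so `ℓ ≡ 1 (mod 4)` (`mod_four_eq_one_of_sq_add_sq`).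
-/

/-- The size argument killing the `i`-coordinate: `p ∣ E`, while `E² < p²`. -/
lemma eq_zero_of_sq_add_mul_eq {p ℓ : ℕ} (hp : p.Prime) (hpl : 4 * ℓ ^ 2 < p) {E F : ℤ}
    (hF : 0 ≤ F) (h : E ^ 2 + p * F = 4 * p * (ℓ : ℤ) ^ 2) : E = 0 := by
  have hpos : (0 : ℤ) < p := by exact_mod_cast hp.pos
  have hdvd : (p : ℤ) ∣ E ^ 2 := ⟨4 * (ℓ : ℤ) ^ 2 - F, by linear_combination h⟩
  have hE : (p : ℤ) ∣ E := (Nat.prime_iff_prime_int.mp hp).dvd_of_dvd_pow hdvd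
  have hpl' : 4 * (ℓ : ℤ) ^ 2 < p := by exact_mod_cast hpl
  have hlt : E ^ 2 < (p : ℤ) ^ 2 := by nlinarith [mul_nonneg hpos.le hF]
  exact Int.eq_zero_of_abs_lt_dvd hE (abs_lt_of_sq_lt_sq hlt hpos.le)

lemma mod_four_eq_one_of_sq_add_sq {ℓ : ℕ} (hℓ : ℓ.Prime) {x y : ℤ} (hx : ¬ (ℓ : ℤ) ∣ x)
    (h : x ^ 2 + y ^ 2 = (ℓ : ℤ) ^ 2) : ℓ % 4 = 1 := by
  have : Fact ℓ.Prime := ⟨hℓ⟩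
  have h3 : ℓ % 4 ≠ 3 := by
    have hx0 : (x : ZMod ℓ) ≠ 0 := by rwa [Ne, ZMod.intCast_zmod_eq_zero_iff_dvd]
    have hc := congrArg (Int.cast : ℤ → ZMod ℓ) h
    push_cast at hc
    rw [ZMod.natCast_self] at hc
    exact ZMod.mod_four_ne_three_of_sq_eq_neg_sq' hx0
      (x := (y : ZMod ℓ)) (by linear_combination hc)
  rcases hℓ.eq_two_or_odd with rfl | hodd
  · -- for `ℓ = 2`, both `x` and `y` would be odd, so `x² + y² ≡ 2 (mod 4)`
    exfalso
    push_cast at hx h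
    obtain ⟨a, rfl⟩ : Odd x := by
      rw [← Int.not_even_iff_odd, even_iff_two_dvd]; exact hx
    rcases Int.even_or_odd' y with ⟨b, rfl | rfl⟩ <;> ring_nf at h <;> omega
  · omega

open Quaternion

/-- The reduced norm of a quaternion: `Nrd x = x * star x` (a scalar). -/
noncomputable def Nrd {c₁ c₂ : ℚ} (x : ℍ[ℚ, c₁, c₂]) : ℚ := (x * star x).re

/-- `x ∈ ℚ` is divisible by the integer `n` within `ℤ`. -/
def IntDvd (n : ℤ) (x : ℚ) : Prop := ∃ z : ℤ, x = (n : ℚ) * (z : ℚ)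

/-- `I` is a left ideal of the (maximal order whose underlying set is) `Os`. -/
def IsLeftIdealOf {c₁ c₂ : ℚ} (Os : Set ℍ[ℚ, c₁, c₂]) (I : AddSubgroup ℍ[ℚ, c₁, c₂]) : Prop :=
  (I : Set ℍ[ℚ, c₁, c₂]) ⊆ Os ∧ ∀ x ∈ Os, ∀ y ∈ I, x * y ∈ I

/-- The left ideal `I` has reduced norm `ℓ` (gcd of reduced norms of elements is `ℓ`). -/
def HasReducedNorm {c₁ c₂ : ℚ} (I : AddSubgroup ℍ[ℚ, c₁, c₂]) (ℓ : ℤ) : Prop :=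
  (∀ α ∈ I, IntDvd ℓ (Nrd α)) ∧ ∀ d : ℤ, (∀ α ∈ I, IntDvd d (Nrd α)) → d ∣ ℓ

/-- The set `ℓO + I·r = {ℓ·x + y·r : x ∈ Os, y ∈ I}`. -/
def shiftSet {c₁ c₂ : ℚ} (ℓ : ℕ) (Os I : Set ℍ[ℚ, c₁, c₂]) (r : ℍ[ℚ, c₁, c₂]) :
    Set ℍ[ℚ, c₁, c₂] :=
  {z | ∃ x ∈ Os, ∃ y ∈ I, z = (ℓ : ℍ[ℚ, c₁, c₂]) * x + y * r}

/-- The quaternion algebra `ℍ[ℚ, −1, −p]`. -/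
abbrev H1 (p : ℕ) : Type := ℍ[ℚ, -1, -(p : ℚ)]

def qi (p : ℕ) : H1 p := ⟨0, 1, 0, 0⟩
def qj (p : ℕ) : H1 p := ⟨0, 0, 1, 0⟩
def qk (p : ℕ) : H1 p := ⟨0, 0, 0, 1⟩

/-- The maximal order `O = ℤ·1 + ℤ·i + ℤ·(1+j)/2 + ℤ·(i+k)/2` of `ℍ[ℚ,−1,−p]`,
the endomorphism ring of `y² = x³ + x` over `𝔽_{p²}` (as a set). -/
def O1728 (p : ℕ) : Set (H1 p) :=
  {z | ∃ A B C D : ℤ, z = (A : H1 p) + B • qi p +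
    C • (⟨1/2, 0, 1/2, 0⟩ : H1 p) + D • (⟨0, 1/2, 0, 1/2⟩ : H1 p)}

/-- Lemma 3.3(2): for primes `p ≡ 3 (mod 4)` and `ℓ` with `p > 4ℓ²`, if
`s ∈ ℓ⁻¹O` has `s² = −p` and `s ∉ {±j, ±k}`, then `ℓ ≡ 1 (mod 4)` and
`s = (xj + yk)/ℓ` with `ℓ ∤ x` and `x² + y² = ℓ²`. -/
theorem stmt9 (p ℓ : ℕ) (hp : p.Prime) (hℓ : ℓ.Prime)
    (hp4 : p % 4 = 3) (hpl : 4 * ℓ ^ 2 < p)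
    (s : H1 p) (hsO : (ℓ : H1 p) * s ∈ O1728 p) (hs2 : s * s = -(p : H1 p))
    (hs : s ∉ ({qj p, -qj p, qk p, -qk p} : Set (H1 p))) :
    ℓ % 4 = 1 ∧ ∃ x y : ℤ, ¬ ((ℓ : ℤ) ∣ x) ∧ x ^ 2 + y ^ 2 = (ℓ : ℤ) ^ 2 ∧
      (ℓ : H1 p) * s = x • qj p + y • qk p := by
  have hℓ0 : (ℓ : ℚ) ≠ 0 := by exact_mod_cast hℓ.ne_zero
  have hp0 : (0 : ℚ) < p := by exact_mod_cast hp.pos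
  obtain ⟨A, B, C, D, hz⟩ := hsO
  obtain ⟨t, u, v, w⟩ := s
  have hre := congrArg QuaternionAlgebra.re hz
  have hI := congrArg QuaternionAlgebra.imI hz
  have hJ := congrArg QuaternionAlgebra.imJ hz
  have hK := congrArg QuaternionAlgebra.imK hz
  have sre := congrArg QuaternionAlgebra.re hs2
  have sI := congrArg QuaternionAlgebra.imI hs2
  have sJ := congrArg QuaternionAlgebra.imJ hs2
  have sK := congrArg QuaternionAlgebra.imK hs2
  simp [qi] at hre hI hJ hK sre sI sJ sK
  have ht : t = 0 := by
    by_contra ht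
    have hu : u = 0 := by
      have : t * u = 0 := by linarith
      simpa [ht] using this
    have hv : v = 0 := by
      have : t * v = 0 := by linarith
      simpa [ht] using this
    have hw : w = 0 := by
      have : t * w = 0 := by linarith
      simpa [ht] using this
    subst hu hv hw
    nlinarith [sq_nonneg t]
  subst ht
  have hnorm : u ^ 2 + p * (v ^ 2 + w ^ 2) = p := by linarith
  have hC : (C : ℚ) = -2 * A := by linarith
  have hE : 2 * B + D = 0 := by
    apply eq_zero_of_sq_add_mul_eq hp hpl (F := 4 * A ^ 2 + D ^ 2) (by positivity)
    have e1 : ((2 * B + D : ℤ) : ℚ) = 2 * (ℓ * u) := by push_cast; linarith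
    have e2 : (A : ℚ) = -(ℓ * v) := by linarith
    have e3 : (D : ℚ) = 2 * (ℓ * w) := by linarith
    have : (((2 * B + D) ^ 2 + p * (4 * A ^ 2 + D ^ 2) : ℤ) : ℚ)
        = ((4 * p * (ℓ : ℤ) ^ 2 : ℤ) : ℚ) := by
      push_cast at e1 ⊢
      rw [e1, e2, e3]
      linear_combination 4 * (ℓ : ℚ) ^ 2 * hnorm
    exact_mod_cast this
  have hD : (D : ℚ) = -2 * B := by
    have : ((2 * B + D : ℤ) : ℚ) = 0 := by rw [hE]; simp
    push_cast at this
    linarith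
  have hu : u = 0 := by
    have : (ℓ : ℚ) * u = 0 := by linarith
    simpa [hℓ0] using this
  subst hu
  have hv : (ℓ : ℚ) * v = ((-A : ℤ) : ℚ) := by push_cast; linarith
  have hw : (ℓ : ℚ) * w = ((-B : ℤ) : ℚ) := by push_cast; linarith
  have hvw : v ^ 2 + w ^ 2 = 1 := by
    have : (p : ℚ) * (v ^ 2 + w ^ 2) = p * 1 := by linarith
    exact mul_left_cancel₀ hp0.ne' this
  generalize -A = x at hv
  generalize -B = y at hw
  have hxy : x ^ 2 + y ^ 2 = (ℓ : ℤ) ^ 2 := by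
    have : ((x ^ 2 + y ^ 2 : ℤ) : ℚ) = (((ℓ : ℤ) ^ 2 : ℤ) : ℚ) := by
      push_cast
      rw [← hv, ← hw]
      linear_combination (ℓ : ℚ) ^ 2 * hvw
    exact_mod_cast this
  have hx : ¬ (ℓ : ℤ) ∣ x := by
    rintro ⟨c, rfl⟩
    have hvc : v = c := by
      push_cast at hv
      exact mul_left_cancel₀ hℓ0 hv
    subst hvc
    -- `v = c` is an integer with `c² ≤ 1`
    have hc : c ^ 2 ≤ 1 := by
      have : (c : ℚ) ^ 2 ≤ 1 := by nlinarith [sq_nonneg w]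
      exact_mod_cast this
    have hc1 : -1 ≤ c := by nlinarith
    have hc2 : c ≤ 1 := by nlinarith
    apply hs
    interval_cases c
    · have : w = 0 := by
        have : w ^ 2 = 0 := by push_cast at hvw; linarith
        simpa using this
      subst this
      right; left
      ext <;> simp [qj]
    · have : w ^ 2 = 1 := by push_cast at hvw; linarith
      rcases sq_eq_sq_iff_eq_or_eq_neg.mp (this.trans (one_pow 2).symm) with rfl | rfl
      · right; right; left
        ext <;> simp [qk]
      · right; right; right
        ext <;> simp [qk]
    · have : w = 0 := by
        have : w ^ 2 = 0 := by push_cast at hvw; linarith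
        simpa using this
      subst this
      left
      ext <;> simp [qj]
  refine ⟨mod_four_eq_one_of_sq_add_sq hℓ hx hxy, x, y, hx, hxy, ?_⟩
  ext <;> simp [qj, qk, hv, hw]
end

section
/- Let p ≡ 2 (mod 3) and ℓ be primes with p > 3ℓ². Suppose s ∈ ℍ[ℚ,−3,−p] satisfies ℓ·s ∈ O, s² = −p, and s ∉ {j, −j, ε·j, −ε·j, ε̄·j, −ε̄·j}. Then ℓ ≡ 1 (mod 3) and s = ((x + y·ε)·j)/ℓ for some integers x, y with ℓ ∤ x and x² + x·y + y² = ℓ². -/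
/-!
Write `ℓ s = A + B ε + C (i+k)/3 + D (j+k)/2`. Since `s² = -p`, the element `s` has trace zero, so
`B = -2A`, and comparing norms gives `N² + p (C² + 3CD + 3D²) = 3 p ℓ²` with `N = C - 3A`. Hence
`p ∣ N`, and `p > 3ℓ²` forces `N = 0`: the `i`-component of `s` vanishes. With `x = -A` and
`y = 2A + D` this reads `ℓ s = (x + y ε) j` and `x² + xy + y² = ℓ²`.

If `ℓ ∣ x` then `ℓ ∣ y`, and `(x/ℓ, y/ℓ)` is one of the six integral solutions of
`a² + ab + b² = 1`, which correspond to the six excluded values of `s`. So `ℓ ∤ x`, and a nontrivial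
zero of `x² + xy + y²` modulo `ℓ` excludes `ℓ ≡ 2 (mod 3)`, where cubing is injective; for `ℓ = 3`
the equation `x² + xy + y² = 9` forces `3 ∣ x`.
-/

open Quaternion

/-- The quaternion algebra `ℍ[ℚ, −3, −p]`. -/
abbrev H3 (p : ℕ) : Type := ℍ[ℚ, -3, -(p : ℚ)]

def qi3 (p : ℕ) : H3 p := ⟨0, 1, 0, 0⟩
def qj3 (p : ℕ) : H3 p := ⟨0, 0, 1, 0⟩
def qk3 (p : ℕ) : H3 p := ⟨0, 0, 0, 1⟩

/-- `ε = (1+i)/2`. -/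
def eps (p : ℕ) : H3 p := ⟨1/2, 1/2, 0, 0⟩

/-- `ε̄ = (1−i)/2`. -/
def epsBar (p : ℕ) : H3 p := ⟨1/2, -(1/2), 0, 0⟩

/-- The maximal order `O = ℤ·1 + ℤ·ε + ℤ·(i+k)/3 + ℤ·(j+k)/2` of `ℍ[ℚ,−3,−p]`,
the endomorphism ring of `y² = x³ + 1` over `𝔽_{p²}` (as a set). -/
def O0 (p : ℕ) : Set (H3 p) :=
  {z | ∃ A B C D : ℤ, z = (A : H3 p) + B • eps p +
    C • (⟨0, 1/3, 0, 1/3⟩ : H3 p) + D • (⟨0, 0, 1/2, 1/2⟩ : H3 p)}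

/-- The form `x² + xy + y²` is anisotropic modulo a prime `ℓ ≡ 2 (mod 3)`: a zero satisfies
`x³ = y³`, hence `x = y` by Fermat's little theorem. -/
theorem dvd_of_dvd_form {ℓ : ℕ} (hℓ : ℓ.Prime) (h2 : ℓ % 3 = 2) (x y : ℤ)
    (h : (ℓ : ℤ) ∣ x ^ 2 + x * y + y ^ 2) : (ℓ : ℤ) ∣ x := by
  have : Fact ℓ.Prime := ⟨hℓ⟩
  rw [← ZMod.intCast_zmod_eq_zero_iff_dvd] at h ⊢
  push_cast at h
  generalize (x : ZMod ℓ) = a at *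
  generalize (y : ZMod ℓ) = b at *
  by_contra ha
  have hb : b ≠ 0 := by
    rintro rfl
    apply ha
    simpa using h
  have hc : a ^ 3 = b ^ 3 := by linear_combination (a - b) * h
  obtain ⟨k, hk⟩ : ∃ k, ℓ - 1 = 3 * k + 1 := ⟨ℓ / 3, by omega⟩
  have h1 := ZMod.pow_card_sub_one_eq_one ha
  have h1' := ZMod.pow_card_sub_one_eq_one hb
  rw [hk, pow_succ, pow_mul] at h1 h1'
  rw [hc] at h1
  have hab : a = b := mul_left_cancel₀ (pow_ne_zero k (pow_ne_zero 3 hb)) (h1.trans h1'.symm)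
  subst hab
  have h3 : (3 : ZMod ℓ) * a ^ 2 = 0 := by linear_combination h
  rcases mul_eq_zero.1 h3 with h3 | h3
  · have h4 : ((3 : ℕ) : ZMod ℓ) = 0 := by exact_mod_cast h3
    rw [ZMod.natCast_eq_zero_iff, Nat.prime_dvd_prime_iff_eq hℓ Nat.prime_three] at h4
    omega
  · exact ha (by simpa using h3)

theorem three_dvd_of_form_eq_nine (x y : ℤ) (h : x ^ 2 + x * y + y ^ 2 = 9) : (3 : ℤ) ∣ x := by
  have h1 : (3 : ℤ) ∣ (x - y) ^ 2 := ⟨3 - x * y, by linear_combination h⟩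
  obtain ⟨z, hz⟩ := Int.prime_three.dvd_of_dvd_pow h1
  obtain rfl : y = x - 3 * z := by linarith
  have h2 : (3 : ℤ) ∣ x ^ 2 := ⟨1 + x * z - z ^ 2, by linarith⟩
  exact Int.prime_three.dvd_of_dvd_pow h2

theorem form_eq_one {a b : ℤ} (h : a ^ 2 + a * b + b ^ 2 = 1) :
    (a = 1 ∧ b = 0) ∨ (a = -1 ∧ b = 0) ∨ (a = 0 ∧ b = 1) ∨ (a = 0 ∧ b = -1) ∨
      (a = 1 ∧ b = -1) ∨ (a = -1 ∧ b = 1) := by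
  have h1 : a ≤ 1 := by nlinarith [sq_nonneg (a + 2 * b)]
  have h2 : -1 ≤ a := by nlinarith [sq_nonneg (a + 2 * b)]
  have h3 : b ≤ 1 := by nlinarith [sq_nonneg (b + 2 * a)]
  have h4 : -1 ≤ b := by nlinarith [sq_nonneg (b + 2 * a)]
  interval_cases a <;> interval_cases b <;> simp_all

/-- A quaternion whose square is `-p` has trace zero and norm `p`. -/
theorem coords_of_sq {p : ℕ} (hp : 0 < p) {s : H3 p} (h : s * s = -(p : H3 p)) :
    s.re = 0 ∧ 3 * s.imI ^ 2 + p * s.imJ ^ 2 + 3 * p * s.imK ^ 2 = p := by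
  obtain ⟨t, u, v, w⟩ := s
  have e0 := congrArg QuaternionAlgebra.re h
  have e1 := congrArg QuaternionAlgebra.imI h
  have e2 := congrArg QuaternionAlgebra.imJ h
  have e3 := congrArg QuaternionAlgebra.imK h
  simp at e0 e1 e2 e3
  have hp' : (0 : ℚ) < p := by exact_mod_cast hp
  have ht : t = 0 := by
    by_contra ht
    have hu : u = 0 := mul_left_cancel₀ ht (by linarith)
    have hv : v = 0 := mul_left_cancel₀ ht (by linarith)
    have hw : w = 0 := mul_left_cancel₀ ht (by linarith)
    subst hu hv hw
    nlinarith [mul_self_nonneg t]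
  subst ht
  exact ⟨rfl, by simp only; linarith⟩

/-- Applied with `N/(3ℓ)` the `i`-component of `s`: `p` divides `N`, but `N² ≤ 3pℓ² < p²`. -/
theorem norm_eq_descent {p : ℕ} {ℓ : ℕ} (hp : p.Prime) (hpl : 3 * ℓ ^ 2 < p) {N Q : ℤ}
    (hQ : 0 ≤ Q) (h : N ^ 2 + p * Q = 3 * p * (ℓ : ℤ) ^ 2) : N = 0 := by
  have hp' : (0 : ℤ) < p := by exact_mod_cast hp.pos
  have hpl' : 3 * (ℓ : ℤ) ^ 2 < p := by exact_mod_cast hpl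
  have h1 : (p : ℤ) ∣ N ^ 2 := ⟨3 * (ℓ : ℤ) ^ 2 - Q, by linarith⟩
  obtain ⟨M, rfl⟩ := (Nat.prime_iff_prime_int.1 hp).dvd_of_dvd_pow h1
  have h2 : (p : ℤ) * M ^ 2 + Q = 3 * (ℓ : ℤ) ^ 2 :=
    mul_left_cancel₀ hp'.ne' (by linarith)
  have h3 : M ^ 2 < 1 := by nlinarith
  have h4 : M = 0 := by nlinarith
  simp [h4]

/-- Lemma 3.7(2): for primes `p ≡ 2 (mod 3)` and `ℓ` with `p > 3ℓ²`, if
`s ∈ ℓ⁻¹O` has `s² = −p` and `s ∉ {±j, ±εj, ±ε̄j}`, then `ℓ ≡ 1 (mod 3)` and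
`s = ((x + yε)j)/ℓ` with `ℓ ∤ x` and `x² + xy + y² = ℓ²`. -/
theorem stmt14 (p ℓ : ℕ) (hp : p.Prime) (hℓ : ℓ.Prime)
    (hp3 : p % 3 = 2) (hpl : 3 * ℓ ^ 2 < p)
    (s : H3 p) (hsO : (ℓ : H3 p) * s ∈ O0 p) (hs2 : s * s = -(p : H3 p))
    (hs : s ∉ ({qj3 p, -qj3 p, eps p * qj3 p, -(eps p * qj3 p),
      epsBar p * qj3 p, -(epsBar p * qj3 p)} : Set (H3 p))) :
    ℓ % 3 = 1 ∧ ∃ x y : ℤ, ¬ ((ℓ : ℤ) ∣ x) ∧ x ^ 2 + x * y + y ^ 2 = (ℓ : ℤ) ^ 2 ∧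
      (ℓ : H3 p) * s = ((x : H3 p) + y • eps p) * qj3 p := by
  obtain ⟨A, B, C, D, hz⟩ := hsO
  obtain ⟨hre, hn⟩ := coords_of_sq hp.pos hs2
  have hl0 : (ℓ : ℚ) ≠ 0 := by exact_mod_cast hℓ.ne_zero
  have hl0' : (ℓ : ℤ) ≠ 0 := by exact_mod_cast hℓ.ne_zero
  have e0 := congrArg QuaternionAlgebra.re hz
  have e1 := congrArg QuaternionAlgebra.imI hz
  have e2 := congrArg QuaternionAlgebra.imJ hz
  have e3 := congrArg QuaternionAlgebra.imK hz
  simp [eps, hre] at e0 e1 e2 e3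
  have hB : (B : ℚ) = -2 * A := by linarith
  have hnorm : (C - 3 * A) ^ 2 + p * (C ^ 2 + 3 * C * D + 3 * D ^ 2) = 3 * p * (ℓ : ℤ) ^ 2 := by
    have hmul : 3 * ((ℓ : ℚ) * s.imI) ^ 2 + p * ((ℓ : ℚ) * s.imJ) ^ 2
        + 3 * p * ((ℓ : ℚ) * s.imK) ^ 2 = p * (ℓ : ℚ) ^ 2 := by
      linear_combination (ℓ : ℚ) ^ 2 * hn
    rw [e1, e2, e3, hB] at hmul
    have : ((C : ℚ) - 3 * A) ^ 2 + p * (C ^ 2 + 3 * C * D + 3 * D ^ 2) = 3 * p * (ℓ : ℚ) ^ 2 := by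
      linear_combination 3 * hmul
    exact_mod_cast this
  have hN : C - 3 * A = 0 :=
    norm_eq_descent hp hpl (by nlinarith [sq_nonneg (2 * C + 3 * D), sq_nonneg D]) hnorm
  obtain rfl : C = 3 * A := by linarith
  have hp0 : (p : ℤ) ≠ 0 := by exact_mod_cast hp.ne_zero
  have hform : (-A) ^ 2 + (-A) * (2 * A + D) + (2 * A + D) ^ 2 = (ℓ : ℤ) ^ 2 :=
    mul_left_cancel₀ (mul_ne_zero three_ne_zero hp0) (by linear_combination hnorm)
  push_cast at e1 e3
  have f1 : s.imI = 0 := mul_left_cancel₀ hl0 (by rw [e1, hB]; ring)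
  have hnd : ¬ (ℓ : ℤ) ∣ -A := by
    rintro ⟨a, ha⟩
    have hy : (ℓ : ℤ) ∣ (2 * A + D) ^ 2 :=
      ⟨ℓ - a * (-A) - a * (2 * A + D), by rw [ha] at hform ⊢; linear_combination hform⟩
    obtain ⟨b, hb⟩ := (Nat.prime_iff_prime_int.1 hℓ).dvd_of_dvd_pow hy
    have hab : a ^ 2 + a * b + b ^ 2 = 1 := by
      rw [ha, hb] at hform
      exact mul_left_cancel₀ (pow_ne_zero 2 hl0') (by linear_combination hform)
    have haQ : (-A : ℚ) = ℓ * a := by exact_mod_cast ha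
    have hbQ : (2 * A + D : ℚ) = ℓ * b := by exact_mod_cast hb
    have f2 : s.imJ = a + b / 2 := mul_left_cancel₀ hl0 (by rw [e2]; linarith)
    have f3 : s.imK = b / 2 := mul_left_cancel₀ hl0 (by rw [e3]; linarith)
    apply hs
    simp only [Set.mem_insert_iff, Set.mem_singleton_iff, QuaternionAlgebra.ext_iff, hre, f1, f2, f3]
    rcases form_eq_one hab with ⟨rfl, rfl⟩ | ⟨rfl, rfl⟩ | ⟨rfl, rfl⟩ | ⟨rfl, rfl⟩ | ⟨rfl, rfl⟩ |
      ⟨rfl, rfl⟩ <;> norm_num [qj3, eps, epsBar]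
  refine ⟨?_, -A, 2 * A + D, hnd, hform, ?_⟩
  · have h3 : ℓ % 3 ≠ 0 := by
      intro h3
      obtain rfl : 3 = ℓ :=
        (Nat.prime_dvd_prime_iff_eq Nat.prime_three hℓ).1 (Nat.dvd_of_mod_eq_zero h3)
      exact hnd (three_dvd_of_form_eq_nine _ _ (by rw [hform]; norm_num))
    have h2 : ℓ % 3 ≠ 2 := fun h2 =>
      hnd (dvd_of_dvd_form hℓ h2 _ _ (hform ▸ dvd_pow_self _ two_ne_zero))
    omega
  · ext <;> simp [qj3, eps, hre, f1, e2, e3] <;> ring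
end

section
/- Let ℓ > 3 and p be primes with p ≡ 3 (mod 4) and p > 4ℓ². Then there are exactly ℓ+1 left O-ideals of reduced norm ℓ, and the relation 'I and J are in the same left ideal class' partitions them into exactly (ℓ+1)/2 classes, each class containing exactly 2 of these ideals. Moreover, some left O-ideal of reduced norm ℓ is principal if and only if ℓ ≡ 1 (mod 4), in which case exactly two of the ℓ+1 ideals are principal and these two lie in the same class. -/
/-!
Since `ℓ` is odd and prime to `p`, reduction modulo `ℓ` is a surjection `phi` of `O` onto
`M₂(𝔽_ℓ)` with kernel `ℓ O`, carrying the reduced norm to the determinant (`phi_surj`, `ker_phi`,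
`det_phi`). A left ideal of reduced norm `ℓ` contains `ℓ`, as it contains the norms of its
elements, so it is the preimage of a left ideal of `M₂(𝔽_ℓ)` consisting of singular matrices and
not zero: the annihilator `idl x y` of a point `(x : y)` of the projective line over `𝔽_ℓ`
(`exists_eq_idl`, `idl_mem`, `idl_eq_iff`). This gives the count `ℓ + 1`.

If `J = I μ` with both ideals of norm `ℓ`, then `μ` has norm `1` and `ℓ μ` belongs to `J ⊆ O` and
has norm `ℓ ^ 2`. As `4 ℓ ^ 2 < p`, elements of `O` of norm at most `ℓ ^ 2` are in `ℤ[i]`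
(`short_mem`). Either `μ` is a unit of `ℤ[i]`, so that `J` is `I` or `I i`, or the reduction of
`ℓ μ` has rank one, which forces `x ^ 2 + y ^ 2 = 0` and `J = idl x (-y)` (`sameClass_cases`).
Right multiplication by `i` sends `(x : y)` to `(-y : x)`, and fixes exactly the isotropic points,
those with `x ^ 2 + y ^ 2 = 0`. An ideal is principal exactly at an isotropic point: a generator
is an element of `ℤ[i]` of norm `ℓ`. There are two isotropic points if `ℓ ≡ 1 (mod 4)` and none
otherwise, so every class has two elements.
-/

open Quaternion

/-- Two left ideals are in the same left ideal class: `J = I·μ` for some `μ ≠ 0`. -/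
def SameClass {c₁ c₂ : ℚ} (I J : AddSubgroup ℍ[ℚ, c₁, c₂]) : Prop :=
  ∃ μ : ℍ[ℚ, c₁, c₂], μ ≠ 0 ∧ (J : Set ℍ[ℚ, c₁, c₂]) = (· * μ) '' (I : Set ℍ[ℚ, c₁, c₂])

/-- `I` is a principal left ideal of the order with underlying set `Os`: `I = O·α`. -/
def IsPrincipalIdeal {c₁ c₂ : ℚ} (Os : Set ℍ[ℚ, c₁, c₂]) (I : AddSubgroup ℍ[ℚ, c₁, c₂]) :
    Prop :=
  ∃ α ∈ Os, (I : Set ℍ[ℚ, c₁, c₂]) = (· * α) '' Os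

/-- The set of left `O`-ideals of reduced norm `ℓ` for `O = End(E₁₇₂₈)`. -/
def S1 (p ℓ : ℕ) : Set (AddSubgroup (H1 p)) :=
  {I | IsLeftIdealOf (O1728 p) I ∧ HasReducedNorm I (ℓ : ℤ)}

/-! ### Integral coordinates on the order -/

/-- The element of the order with coordinates `A, B, C, D` on `1, i, (1+j)/2, (i+k)/2`. -/
def omk (p : ℕ) (A B C D : ℤ) : H1 p := ⟨A + C / 2, B + D / 2, C / 2, D / 2⟩

lemma mem_order {p : ℕ} {z : H1 p} : z ∈ O1728 p ↔ ∃ A B C D : ℤ, z = omk p A B C D := by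
  have key : ∀ A B C D : ℤ, (A : H1 p) + B • qi p +
      C • (⟨1/2, 0, 1/2, 0⟩ : H1 p) + D • (⟨0, 1/2, 0, 1/2⟩ : H1 p) = omk p A B C D := by
    intro A B C D
    ext <;> simp [omk, qi] <;> ring
  simp only [O1728, Set.mem_ofPred_eq, key]

lemma omk_mem {p : ℕ} (A B C D : ℤ) : omk p A B C D ∈ O1728 p :=
  mem_order.2 ⟨A, B, C, D, rfl⟩

lemma omk_add {p : ℕ} (A B C D A' B' C' D' : ℤ) :
    omk p A B C D + omk p A' B' C' D' = omk p (A + A') (B + B') (C + C') (D + D') := by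
  ext <;> simp [omk] <;> ring

lemma omk_neg {p : ℕ} (A B C D : ℤ) : -omk p A B C D = omk p (-A) (-B) (-C) (-D) := by
  ext <;> simp [omk] <;> ring

lemma omk_star {p : ℕ} (A B C D : ℤ) :
    star (omk p A B C D) = omk p (A + C) (-B) (-C) (-D) := by
  ext <;> simp [omk] <;> ring

lemma omk_mul {p : ℕ} {n : ℤ} (hn : (p : ℤ) + 1 = 4 * n) (A B C D A' B' C' D' : ℤ) :
    omk p A B C D * omk p A' B' C' D' =
      omk p (A * A' - B * B' - B' * D - n * (C * C' + D * D'))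
        (A * B' + B * A' + B' * C - n * (D * C' - C * D'))
        (A * C' - B * D' + C * A' + D * B' + C * C' + D * D' - D' * D)
        (A * D' + B * C' + D * A' - C * B' + D * C' - C * D' + D' * C) := by
  have hq : (p : ℚ) = 4 * n - 1 := by
    have : ((p : ℤ) : ℚ) + 1 = 4 * n := by exact_mod_cast hn
    push_cast at this; linarith
  ext <;> simp [omk, hq] <;> ring

lemma nrd_eq {p : ℕ} (z : H1 p) :
    Nrd z = z.re ^ 2 + z.imI ^ 2 + p * z.imJ ^ 2 + p * z.imK ^ 2 := by
  simp [Nrd]; ring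

lemma nrd_omk {p : ℕ} {n : ℤ} (hn : (p : ℤ) + 1 = 4 * n) (A B C D : ℤ) :
    Nrd (omk p A B C D) =
      ((A ^ 2 + A * C + B ^ 2 + B * D + n * (C ^ 2 + D ^ 2) : ℤ) : ℚ) := by
  have hq : (p : ℚ) = 4 * n - 1 := by
    have : ((p : ℤ) : ℚ) + 1 = 4 * n := by exact_mod_cast hn
    push_cast at this; linarith
  rw [nrd_eq]; simp [omk, hq]; ring

lemma nrd_mul {p : ℕ} (x y : H1 p) : Nrd (x * y) = Nrd x * Nrd y := by
  simp only [nrd_eq]; simp; ring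

lemma nrd_star {p : ℕ} (x : H1 p) : Nrd (star x) = Nrd x := by
  simp only [nrd_eq]; simp

lemma mul_star_eq {p : ℕ} (x : H1 p) : x * star x = ((Nrd x : ℚ) : H1 p) := by
  ext <;> simp <;> try rw [nrd_eq]
  all_goals ring

lemma star_mul_eq {p : ℕ} (x : H1 p) : star x * x = ((Nrd x : ℚ) : H1 p) := by
  ext <;> simp <;> try rw [nrd_eq]
  all_goals ring

lemma nrd_pos {p : ℕ} (hp : 0 < p) {x : H1 p} (hx : x ≠ 0) : 0 < Nrd x := by
  have hq : (0 : ℚ) < p := by exact_mod_cast hp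
  rw [nrd_eq]
  by_contra h
  apply hx
  have h1 := sq_nonneg x.re
  have h2 := sq_nonneg x.imI
  have h3 := mul_nonneg hq.le (sq_nonneg x.imJ)
  have h4 := mul_nonneg hq.le (sq_nonneg x.imK)
  have e1 : x.re ^ 2 = 0 := by linarith
  have e2 : x.imI ^ 2 = 0 := by linarith
  have e3 : (p : ℚ) * x.imJ ^ 2 = 0 := by linarith
  have e4 : (p : ℚ) * x.imK ^ 2 = 0 := by linarith
  ext
  · simpa using e1
  · simpa using e2
  · simpa [hq.ne'] using e3
  · simpa [hq.ne'] using e4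

/-- Since `4 * ℓ ^ 2 < p`, the elements of the order of norm at most `ℓ ^ 2` lie in `ℤ[i]`. -/
lemma short_mem {p ℓ : ℕ} (hpl : 4 * ℓ ^ 2 < p) {z : H1 p} (hz : z ∈ O1728 p)
    (h : Nrd z ≤ (ℓ : ℚ) ^ 2) : ∃ A B : ℤ, z = omk p A B 0 0 := by
  obtain ⟨A, B, C, D, rfl⟩ := mem_order.1 hz
  have hq : (4 : ℚ) * ℓ ^ 2 < p := by exact_mod_cast hpl
  rw [nrd_eq] at h
  simp only [omk] at h
  have h1 := sq_nonneg ((A : ℚ) + C / 2)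
  have h2 := sq_nonneg ((B : ℚ) + D / 2)
  have hp0 : (0 : ℚ) < p := lt_of_le_of_lt (by positivity) hq
  have key : ((C ^ 2 + D ^ 2 : ℤ) : ℚ) < 1 := by
    push_cast
    by_contra hc
    push Not at hc
    nlinarith
  have key' : C ^ 2 + D ^ 2 < 1 := by exact_mod_cast key
  have hC : C = 0 := by
    have : C ^ 2 = 0 := by nlinarith [sq_nonneg C, sq_nonneg D]
    simpa using this
  have hD : D = 0 := by
    have : D ^ 2 = 0 := by nlinarith [sq_nonneg C, sq_nonneg D]
    simpa using this
  exact ⟨A, B, by rw [hC, hD]⟩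

/-! ### Reduction of the order modulo `ℓ` -/

/-- Data splitting the order modulo `ℓ`: the element `(1+j)/2` is a root of `X² - X + n`, and it
is sent to the matrix `!![h + a, b; b, h - a]`, while `i` is sent to `!![0, -1; 1, 0]`. -/
structure Splitting (ℓ p : ℕ) where
  /-- the norm `(p + 1) / 4` of `(1+j)/2` -/
  n : ℤ
  /-- first coordinate of a half of the image of `j` -/
  a : ZMod ℓ
  /-- second coordinate of a half of the image of `j` -/
  b : ZMod ℓ
  /-- the inverse of `2` -/
  h : ZMod ℓ
  hn : (p : ℤ) + 1 = 4 * n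
  h2 : 2 * h = 1
  hab : a ^ 2 + b ^ 2 = h ^ 2 - n
  hab0 : a ^ 2 + b ^ 2 ≠ 0
  hp0 : (p : ZMod ℓ) ≠ 0

namespace Splitting

variable {ℓ p : ℕ} (S : Splitting ℓ p)

/-- The image modulo `ℓ` of the element with coordinates `A, B, C, D`. -/
def phiZ (A B C D : ℤ) : Matrix (Fin 2) (Fin 2) (ZMod ℓ) :=
  !![A + C * S.h + C * S.a - D * S.b, -(B + D * S.h) + C * S.b + D * S.a;
     B + D * S.h + C * S.b + D * S.a, A + C * S.h - C * S.a + D * S.b]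

/-- The reduction of the order to `M₂(𝔽_ℓ)`; the value is meaningful only on the order, whose
coordinates are read off as the integers `A, B, C, D` below. -/
def phi (z : H1 p) : Matrix (Fin 2) (Fin 2) (ZMod ℓ) :=
  S.phiZ (z.re - z.imJ).num (z.imI - z.imK).num (2 * z.imJ).num (2 * z.imK).num

lemma phi_omk (A B C D : ℤ) : S.phi (omk p A B C D) = S.phiZ A B C D := by
  have e : ∀ C : ℤ, 2 * ((C : ℚ) / 2) = C := fun C => by ring
  simp [phi, omk, e]

lemma phi_add {x y : H1 p} (hx : x ∈ O1728 p) (hy : y ∈ O1728 p) :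
    S.phi (x + y) = S.phi x + S.phi y := by
  obtain ⟨A, B, C, D, rfl⟩ := mem_order.1 hx
  obtain ⟨A', B', C', D', rfl⟩ := mem_order.1 hy
  rw [omk_add]
  simp only [phi_omk, phiZ]
  ext i j
  fin_cases i <;> fin_cases j <;> simp <;> ring

lemma phi_neg {x : H1 p} (hx : x ∈ O1728 p) : S.phi (-x) = -S.phi x := by
  obtain ⟨A, B, C, D, rfl⟩ := mem_order.1 hx
  rw [omk_neg]
  simp only [phi_omk, phiZ]
  ext i j
  fin_cases i <;> fin_cases j <;> simp <;> ring

lemma phi_mul {x y : H1 p} (hx : x ∈ O1728 p) (hy : y ∈ O1728 p) :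
    S.phi (x * y) = S.phi x * S.phi y := by
  obtain ⟨A, B, C, D, rfl⟩ := mem_order.1 hx
  obtain ⟨A', B', C', D', rfl⟩ := mem_order.1 hy
  rw [omk_mul S.hn]
  simp only [phi_omk, phiZ]
  have hab := S.hab
  have h2 := S.h2
  generalize S.a = a at *
  generalize S.b = b at *
  generalize S.h = h at *
  have hn : (S.n : ZMod ℓ) = h ^ 2 - a ^ 2 - b ^ 2 := by rw [eq_sub_iff_add_eq, eq_sub_iff_add_eq]; linear_combination hab
  -- Both sides differ by the image of `(C + D i) (B' i + C' (1+j)/2)` times `2 * h - 1`.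
  ext i j
  fin_cases i <;> fin_cases j <;> simp [hn]
  · linear_combination (-((-(D * B' : ZMod ℓ)) + (C * C' : ZMod ℓ) * h + (C * C' : ZMod ℓ) * a - (D * C' : ZMod ℓ) * b)) * h2
  · linear_combination (-(-((C * B' : ZMod ℓ) + (D * C' : ZMod ℓ) * h) + (C * C' : ZMod ℓ) * b + (D * C' : ZMod ℓ) * a)) * h2
  · linear_combination (-((C * B' : ZMod ℓ) + (D * C' : ZMod ℓ) * h + (C * C' : ZMod ℓ) * b + (D * C' : ZMod ℓ) * a)) * h2
  · linear_combination (-((-(D * B' : ZMod ℓ)) + (C * C' : ZMod ℓ) * h - (C * C' : ZMod ℓ) * a + (D * C' : ZMod ℓ) * b)) * h2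

lemma det_phi {x : H1 p} (hx : x ∈ O1728 p) :
    ∃ N : ℤ, Nrd x = N ∧ (N : ZMod ℓ) = (S.phi x).det := by
  obtain ⟨A, B, C, D, rfl⟩ := mem_order.1 hx
  refine ⟨_, nrd_omk S.hn A B C D, ?_⟩
  have hab := S.hab
  have h2 := S.h2
  simp only [phi_omk, phiZ, Matrix.det_fin_two_of]
  push_cast
  linear_combination ((C:ZMod ℓ)^2+(D:ZMod ℓ)^2) * hab - (A * C + B * D) * h2

lemma natCast_mul_omk {p : ℕ} (m : ℕ) (A B C D : ℤ) :
    (m : H1 p) * omk p A B C D = omk p (m * A) (m * B) (m * C) (m * D) := by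
  ext <;> simp [omk] <;> ring

lemma intDvd_cast {d N : ℤ} : IntDvd d (N : ℚ) ↔ d ∣ N := by
  constructor
  · rintro ⟨z, hz⟩
    exact ⟨z, by exact_mod_cast hz⟩
  · rintro ⟨z, rfl⟩
    exact ⟨z, by push_cast; rfl⟩

lemma one_eq_omk (p : ℕ) : (1 : H1 p) = omk p 1 0 0 0 := by
  ext <;> simp [omk]

lemma zero_eq_omk (p : ℕ) : (0 : H1 p) = omk p 0 0 0 0 := by
  ext <;> simp [omk]

lemma natCast_eq_omk (p m : ℕ) : (m : H1 p) = omk p m 0 0 0 := by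
  ext <;> simp [omk]

lemma qi_eq_omk (p : ℕ) : qi p = omk p 0 1 0 0 := by
  ext <;> simp [omk, qi]

lemma one_mem (p : ℕ) : (1 : H1 p) ∈ O1728 p := one_eq_omk p ▸ omk_mem _ _ _ _
lemma zero_mem (p : ℕ) : (0 : H1 p) ∈ O1728 p := zero_eq_omk p ▸ omk_mem _ _ _ _
lemma natCast_mem (p m : ℕ) : (m : H1 p) ∈ O1728 p := natCast_eq_omk p m ▸ omk_mem _ _ _ _
lemma qi_mem (p : ℕ) : qi p ∈ O1728 p := qi_eq_omk p ▸ omk_mem _ _ _ _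

lemma add_mem {x y : H1 p} (hx : x ∈ O1728 p) (hy : y ∈ O1728 p) : x + y ∈ O1728 p := by
  obtain ⟨A, B, C, D, rfl⟩ := mem_order.1 hx
  obtain ⟨A', B', C', D', rfl⟩ := mem_order.1 hy
  rw [omk_add]; exact omk_mem _ _ _ _

lemma neg_mem {x : H1 p} (hx : x ∈ O1728 p) : -x ∈ O1728 p := by
  obtain ⟨A, B, C, D, rfl⟩ := mem_order.1 hx
  rw [omk_neg]; exact omk_mem _ _ _ _

lemma star_mem {x : H1 p} (hx : x ∈ O1728 p) : star x ∈ O1728 p := by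
  obtain ⟨A, B, C, D, rfl⟩ := mem_order.1 hx
  rw [omk_star]; exact omk_mem _ _ _ _

lemma mul_mem (S : Splitting ℓ p) {x y : H1 p} (hx : x ∈ O1728 p) (hy : y ∈ O1728 p) : x * y ∈ O1728 p := by
  obtain ⟨A, B, C, D, rfl⟩ := mem_order.1 hx
  obtain ⟨A', B', C', D', rfl⟩ := mem_order.1 hy
  rw [omk_mul S.hn]; exact omk_mem _ _ _ _

lemma phi_gauss (A B : ℤ) : S.phi (omk p A B 0 0) = !![(A : ZMod ℓ), -B; B, A] := by
  simp [phi_omk, phiZ]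

lemma phi_zero : S.phi 0 = 0 := by
  rw [zero_eq_omk, phi_omk]
  ext i j
  fin_cases i <;> fin_cases j <;> simp [phiZ]

lemma phi_natCast_mul {x : H1 p} (hx : x ∈ O1728 p) : S.phi ((ℓ : H1 p) * x) = 0 := by
  obtain ⟨A, B, C, D, rfl⟩ := mem_order.1 hx
  rw [natCast_mul_omk, phi_omk]
  ext i j
  fin_cases i <;> fin_cases j <;> simp [phiZ]

lemma coords_zero [Fact ℓ.Prime] {A B C D : ℤ} (h0 : S.phiZ A B C D = 0) :
    (A : ZMod ℓ) = 0 ∧ (B : ZMod ℓ) = 0 ∧ (C : ZMod ℓ) = 0 ∧ (D : ZMod ℓ) = 0 := by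
  have e00 := congrFun (congrFun h0 0) 0
  have e01 := congrFun (congrFun h0 0) 1
  have e10 := congrFun (congrFun h0 1) 0
  have e11 := congrFun (congrFun h0 1) 1
  simp [phiZ] at e00 e01 e10 e11
  have h2 := S.h2
  have hab0 := S.hab0
  have f1 : (C : ZMod ℓ) * S.a - D * S.b = 0 := by
    linear_combination S.h * (e00 - e11) - (C * S.a - D * S.b) * h2
  have f2 : (C : ZMod ℓ) * S.b + D * S.a = 0 := by
    linear_combination S.h * (e01 + e10) - (C * S.b + D * S.a) * h2
  have hC : (C : ZMod ℓ) = 0 := by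
    have : (S.a ^ 2 + S.b ^ 2) * (C : ZMod ℓ) = 0 := by
      linear_combination S.a * f1 + S.b * f2
    exact (mul_eq_zero.1 this).resolve_left hab0
  have hD : (D : ZMod ℓ) = 0 := by
    have : (S.a ^ 2 + S.b ^ 2) * (D : ZMod ℓ) = 0 := by
      linear_combination S.a * f2 - S.b * f1
    exact (mul_eq_zero.1 this).resolve_left hab0
  simp only [hC, hD] at e00 e10
  refine ⟨by simpa using e00, by simpa using e10, hC, hD⟩

lemma ker_phi [Fact ℓ.Prime] {z : H1 p} (hz : z ∈ O1728 p) (h0 : S.phi z = 0) :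
    ∃ y ∈ O1728 p, z = (ℓ : H1 p) * y := by
  obtain ⟨A, B, C, D, rfl⟩ := mem_order.1 hz
  rw [phi_omk] at h0
  obtain ⟨hA, hB, hC, hD⟩ := S.coords_zero h0
  rw [ZMod.intCast_zmod_eq_zero_iff_dvd] at hA hB hC hD
  obtain ⟨A', rfl⟩ := hA
  obtain ⟨B', rfl⟩ := hB
  obtain ⟨C', rfl⟩ := hC
  obtain ⟨D', rfl⟩ := hD
  exact ⟨omk p A' B' C' D', omk_mem _ _ _ _, (natCast_mul_omk _ _ _ _ _).symm⟩

lemma phi_surj [Fact ℓ.Prime] (M : Matrix (Fin 2) (Fin 2) (ZMod ℓ)) :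
    ∃ z ∈ O1728 p, S.phi z = M := by
  set P := S.h * (M 0 0 - M 1 1)
  set Q := S.h * (M 0 1 + M 1 0)
  set c := (S.a * P + S.b * Q) / (S.a ^ 2 + S.b ^ 2) with hc
  set d := (S.a * Q - S.b * P) / (S.a ^ 2 + S.b ^ 2) with hd
  obtain ⟨C, hC⟩ := ZMod.intCast_surjective c
  obtain ⟨D, hD⟩ := ZMod.intCast_surjective d
  obtain ⟨A, hA⟩ := ZMod.intCast_surjective (S.h * (M 0 0 + M 1 1) - c * S.h)
  obtain ⟨B, hB⟩ := ZMod.intCast_surjective (S.h * (M 1 0 - M 0 1) - d * S.h)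
  have hab0 := S.hab0
  have h2 := S.h2
  have g1 : c * S.a - d * S.b = P := by rw [hc, hd]; field_simp; ring
  have g2 : c * S.b + d * S.a = Q := by rw [hc, hd]; field_simp; ring
  refine ⟨omk p A B C D, omk_mem _ _ _ _, ?_⟩
  rw [phi_omk]
  ext i j
  fin_cases i <;> fin_cases j <;> simp [phiZ, hA, hB, hC, hD]
  · linear_combination g1 + M 0 0 * h2
  · linear_combination g2 + M 0 1 * h2
  · linear_combination g2 + M 1 0 * h2
  · linear_combination (M 1 1 * h2) - g1

/-- The norm form is nondegenerate modulo `ℓ`, so that on a residue class modulo `ℓ` other than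
that of `0` it is not identically divisible by `ℓ ^ 2`. -/
lemma phi_eq_zero_of_norms [Fact ℓ.Prime] {z : H1 p} (hz : z ∈ O1728 p)
    (H : ∀ y ∈ O1728 p, IntDvd ((ℓ : ℤ) ^ 2) (Nrd (z + (ℓ : H1 p) * y))) : S.phi z = 0 := by
  obtain ⟨A, B, C, D, rfl⟩ := mem_order.1 hz
  have hℓ0 : (ℓ : ℤ) ≠ 0 := by exact_mod_cast (Fact.out : ℓ.Prime).ne_zero
  have key : ∀ a b c d : ℤ, ((a * (2 * A + C) + b * (2 * B + D) + c * (A + 2 * S.n * C)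
      + d * (B + 2 * S.n * D) : ℤ) : ZMod ℓ) = 0 := by
    intro a b c d
    have h0 := H _ (omk_mem 0 0 0 0)
    have h1 := H _ (omk_mem a b c d)
    rw [natCast_mul_omk, omk_add, nrd_omk S.hn, intDvd_cast] at h0 h1
    obtain ⟨k, hk⟩ := h0
    obtain ⟨m, hm⟩ := h1
    rw [ZMod.intCast_zmod_eq_zero_iff_dvd]
    refine ⟨m - k - (a ^ 2 + a * c + b ^ 2 + b * d + S.n * (c ^ 2 + d ^ 2)), ?_⟩
    apply mul_left_cancel₀ hℓ0
    linear_combination hm - hk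
  have k1 := key 1 0 0 0
  have k2 := key 0 1 0 0
  have k3 := key 0 0 1 0
  have k4 := key 0 0 0 1
  push_cast at k1 k2 k3 k4
  have hp0 := S.hp0
  have hn : (p : ZMod ℓ) + 1 = 4 * S.n := by
    have := congrArg (Int.cast : ℤ → ZMod ℓ) S.hn
    push_cast at this; exact this
  have hC : (C : ZMod ℓ) = 0 := by
    have : (p : ZMod ℓ) * C = 0 := by linear_combination C * hn + 2 * k3 - k1
    exact (mul_eq_zero.1 this).resolve_left hp0
  have hD : (D : ZMod ℓ) = 0 := by
    have : (p : ZMod ℓ) * D = 0 := by linear_combination D * hn + 2 * k4 - k2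
    exact (mul_eq_zero.1 this).resolve_left hp0
  have hA : (A : ZMod ℓ) = 0 := by linear_combination k3 - 2 * S.n * hC
  have hB : (B : ZMod ℓ) = 0 := by linear_combination k4 - 2 * S.n * hD
  rw [phi_omk]
  ext i j
  fin_cases i <;> fin_cases j <;> simp [phiZ, hA, hB, hC, hD]

/-! ### The ideals of norm `ℓ` -/

/-- The left ideal of the elements of the order whose reduction kills the column vector
`(x, y)`. For `(x, y) ≠ 0` it depends only on the point `(x : y)` of the projective line. -/
def idl (x y : ZMod ℓ) : AddSubgroup (H1 p) where
  carrier := {z | z ∈ O1728 p ∧ S.phi z 0 0 * x + S.phi z 0 1 * y = 0 ∧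
    S.phi z 1 0 * x + S.phi z 1 1 * y = 0}
  zero_mem' := ⟨zero_mem p, by simp [phi_zero], by simp [phi_zero]⟩
  add_mem' := by
    rintro z w ⟨hz, h1, h2⟩ ⟨hw, h3, h4⟩
    refine ⟨add_mem hz hw, ?_, ?_⟩
    · rw [S.phi_add hz hw]; simp only [Matrix.add_apply]; linear_combination h1 + h3
    · rw [S.phi_add hz hw]; simp only [Matrix.add_apply]; linear_combination h2 + h4
  neg_mem' := by
    rintro z ⟨hz, h1, h2⟩
    refine ⟨neg_mem hz, ?_, ?_⟩
    · rw [S.phi_neg hz]; simp only [Matrix.neg_apply]; linear_combination -h1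
    · rw [S.phi_neg hz]; simp only [Matrix.neg_apply]; linear_combination -h2

lemma mem_idl {x y : ZMod ℓ} {z : H1 p} : z ∈ S.idl x y ↔ z ∈ O1728 p ∧
    S.phi z 0 0 * x + S.phi z 0 1 * y = 0 ∧ S.phi z 1 0 * x + S.phi z 1 1 * y = 0 := Iff.rfl

lemma mem_of_phi_zero {x y : ZMod ℓ} {z : H1 p} (hz : z ∈ O1728 p) (h : S.phi z = 0) :
    z ∈ S.idl x y := ⟨hz, by simp [h], by simp [h]⟩

lemma idl_mem [Fact ℓ.Prime] {x y : ZMod ℓ} (hxy : x ≠ 0 ∨ y ≠ 0) : S.idl x y ∈ S1 p ℓ := by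
  have hℓ : ℓ.Prime := Fact.out
  refine ⟨⟨fun z hz => hz.1, ?_⟩, ?_, ?_⟩
  · rintro z hz w ⟨hw, h1, h2⟩
    refine ⟨S.mul_mem hz hw, ?_, ?_⟩
    · rw [S.phi_mul hz hw]; simp only [Matrix.mul_apply, Fin.sum_univ_two]
      linear_combination S.phi z 0 0 * h1 + S.phi z 0 1 * h2
    · rw [S.phi_mul hz hw]; simp only [Matrix.mul_apply, Fin.sum_univ_two]
      linear_combination S.phi z 1 0 * h1 + S.phi z 1 1 * h2
  · rintro z ⟨hz, h1, h2⟩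
    obtain ⟨N, hN, hdet⟩ := S.det_phi hz
    rw [hN, intDvd_cast, ← ZMod.intCast_zmod_eq_zero_iff_dvd, hdet, Matrix.det_fin_two]
    rcases hxy with h | h
    · apply (mul_eq_zero.1 (?_ : _ * x = 0)).resolve_right h
      linear_combination S.phi z 1 1 * h1 - S.phi z 0 1 * h2
    · apply (mul_eq_zero.1 (?_ : _ * y = 0)).resolve_right h
      linear_combination S.phi z 0 0 * h2 - S.phi z 1 0 * h1
  · intro d hd
    -- `d ∣ ℓ ^ 2` because `ℓ` is in the ideal; `ℓ ^ 2 ∣ d` contradicts nondegeneracy.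
    have h1 : d ∣ (ℓ : ℤ) ^ 2 := by
      have hm := hd (ℓ : H1 p) (S.mem_of_phi_zero (natCast_mem p ℓ)
        (by simpa using S.phi_natCast_mul (one_mem p)))
      rw [natCast_eq_omk, nrd_omk S.hn, intDvd_cast] at hm
      simpa using hm
    have h1' : d.natAbs ∣ ℓ ^ 2 := by
      have := Int.natAbs_dvd_natAbs.2 h1
      simpa [Int.natAbs_pow] using this
    obtain ⟨k, hk, hdk⟩ := (Nat.dvd_prime_pow hℓ).1 h1'
    have hk2 : k ≠ 2 := by
      rintro rfl
      have h2 : (ℓ : ℤ) ^ 2 ∣ d := by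
        rw [← Int.natAbs_dvd_natAbs, hdk]; simp [Int.natAbs_pow]
      obtain ⟨z, hz, hzM⟩ := S.phi_surj !![-y, x; 0, 0]
      have hzI : z ∈ S.idl x y := ⟨hz, by simp [hzM]; ring, by simp [hzM]⟩
      have h0 : S.phi z = 0 := by
        refine S.phi_eq_zero_of_norms hz fun w hw => ?_
        obtain ⟨c, hc⟩ := hd _ ((S.idl x y).add_mem hzI (S.mem_of_phi_zero
          (S.mul_mem (natCast_mem p ℓ) hw) (S.phi_natCast_mul hw)))
        obtain ⟨e, rfl⟩ := h2
        exact ⟨e * c, by rw [hc]; push_cast; ring⟩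
      rw [hzM] at h0
      have e0 := congrFun (congrFun h0 0) 0
      have e1 := congrFun (congrFun h0 0) 1
      simp at e0 e1
      tauto
    rw [← Int.natAbs_dvd_natAbs, hdk, Int.natAbs_natCast]
    interval_cases k
    · simp
    · simp
    · exact absurd rfl hk2

/-- Two of the ideals agree exactly when the points of the projective line do. -/
lemma idl_eq_iff [Fact ℓ.Prime] {x y x' y' : ZMod ℓ} (hxy : x ≠ 0 ∨ y ≠ 0)
    (hxy' : x' ≠ 0 ∨ y' ≠ 0) : S.idl x y = S.idl x' y' ↔ x * y' = y * x' := by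
  have aux : ∀ {x y x' y' : ZMod ℓ}, (x ≠ 0 ∨ y ≠ 0) → x * y' = y * x' →
      S.idl x y ≤ S.idl x' y' := by
    rintro x y x' y' hxy h z ⟨hz, h1, h2⟩
    refine ⟨hz, ?_, ?_⟩
    · rcases hxy with h0 | h0
      · apply (mul_eq_zero.1 (?_ : x * _ = 0)).resolve_left h0
        linear_combination x' * h1 + S.phi z 0 1 * h
      · apply (mul_eq_zero.1 (?_ : y * _ = 0)).resolve_left h0
        linear_combination y' * h1 - S.phi z 0 0 * h
    · rcases hxy with h0 | h0
      · apply (mul_eq_zero.1 (?_ : x * _ = 0)).resolve_left h0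
        linear_combination x' * h2 + S.phi z 1 1 * h
      · apply (mul_eq_zero.1 (?_ : y * _ = 0)).resolve_left h0
        linear_combination y' * h2 - S.phi z 1 0 * h
  constructor
  · intro h
    obtain ⟨z, hz, hzM⟩ := S.phi_surj !![-y, x; 0, 0]
    have hzI : z ∈ S.idl x y := ⟨hz, by simp [hzM]; ring, by simp [hzM]⟩
    rw [h] at hzI
    have := hzI.2.1
    simp [hzM] at this
    linear_combination this
  · intro h
    exact le_antisymm (aux hxy h) (aux hxy' (by linear_combination -h))

/-- A left ideal of norm `ℓ` contains `ℓ`: it contains the norms of its elements. -/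
lemma natCast_mem_of_mem_S1 (S : Splitting ℓ p) {I : AddSubgroup (H1 p)} (hI : I ∈ S1 p ℓ) :
    (ℓ : H1 p) ∈ I := by
  obtain ⟨⟨hIsub, hmul⟩, -, hgcd⟩ := hI
  let G : AddSubgroup ℤ := I.comap (Int.castAddHom (H1 p))
  obtain ⟨g, hg⟩ := Int.subgroup_cyclic G
  have hd : g ∣ (ℓ : ℤ) := by
    apply hgcd
    intro α hα
    obtain ⟨A, B, C, D, rfl⟩ := mem_order.1 (hIsub hα)
    have h1 := hmul _ (star_mem (hIsub hα)) _ hα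
    rw [star_mul_eq] at h1
    rw [nrd_omk S.hn] at h1 ⊢
    rw [intDvd_cast]
    generalize A ^ 2 + A * C + B ^ 2 + B * D + S.n * (C ^ 2 + D ^ 2) = N at h1
    have h2 : N ∈ G := by
      have e : (((N : ℤ) : ℚ) : H1 p) = ((N : ℤ) : H1 p) := by ext <;> simp
      rw [e] at h1
      exact h1
    rw [hg, AddSubgroup.mem_closure_singleton] at h2
    obtain ⟨k, hk⟩ := h2
    exact ⟨k, by rw [← hk]; simp [mul_comm]⟩
  have : (ℓ : ℤ) ∈ G := by
    rw [hg, AddSubgroup.mem_closure_singleton]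
    obtain ⟨k, hk⟩ := hd
    exact ⟨k, by rw [hk]; simp [mul_comm]⟩
  have h3 : (((ℓ : ℤ) : ℤ) : H1 p) ∈ I := this
  simpa using h3

lemma exists_phi_ne_zero [Fact ℓ.Prime] {I : AddSubgroup (H1 p)} (hI : I ∈ S1 p ℓ) :
    ∃ α ∈ I, S.phi α ≠ 0 := by
  obtain ⟨⟨hIsub, -⟩, -, hgcd⟩ := hI
  by_contra! H
  have hℓ : ℓ.Prime := Fact.out
  have h : ((ℓ : ℤ) ^ 2) ∣ (ℓ : ℤ) := by
    apply hgcd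
    intro α hα
    obtain ⟨y, hy, rfl⟩ := S.ker_phi (hIsub hα) (H α hα)
    obtain ⟨N, hN, -⟩ := S.det_phi hy
    rw [nrd_mul, hN, natCast_eq_omk, nrd_omk S.hn]
    exact ⟨N, by push_cast; ring⟩
  have h' : ℓ ^ 2 ∣ ℓ := by exact_mod_cast h
  have := Nat.le_of_dvd hℓ.pos h'
  nlinarith [hℓ.two_le]

/-- Every left ideal of norm `ℓ` is the annihilator of a point of the projective line over `𝔽_ℓ`:
its image in `M₂(𝔽_ℓ)` is a left ideal consisting of singular matrices, and not zero. -/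
lemma exists_eq_idl [Fact ℓ.Prime] {I : AddSubgroup (H1 p)} (hI : I ∈ S1 p ℓ) :
    ∃ x y : ZMod ℓ, (x ≠ 0 ∨ y ≠ 0) ∧ I = S.idl x y := by
  have hℓI := S.natCast_mem_of_mem_S1 hI
  obtain ⟨α₀, hα₀, hα₀0⟩ := S.exists_phi_ne_zero hI
  obtain ⟨⟨hIsub, hmul⟩, hnorm, -⟩ := hI
  have hker : ∀ z ∈ O1728 p, S.phi z = 0 → z ∈ I := by
    intro z hz h0
    obtain ⟨y, hy, rfl⟩ := S.ker_phi hz h0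
    have e : (ℓ : H1 p) * y = y * (ℓ : H1 p) := Nat.cast_comm _ _
    rw [e]
    exact hmul _ hy _ hℓI
  have hdet : ∀ z ∈ I, (S.phi z).det = 0 := by
    intro z hz
    obtain ⟨N, hN, hd⟩ := S.det_phi (hIsub hz)
    rw [← hd, ZMod.intCast_zmod_eq_zero_iff_dvd, ← intDvd_cast, ← hN]
    exact hnorm z hz
  -- `(r, s)` is a nonzero row of the reduction of `α₀`.
  obtain ⟨i, j, hij⟩ : ∃ i j, S.phi α₀ i j ≠ 0 := by
    by_contra! H
    exact hα₀0 (by ext i j; simpa using H i j)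
  obtain ⟨r, s, hrs, hrow⟩ : ∃ r s : ZMod ℓ, (r ≠ 0 ∨ s ≠ 0) ∧
      ∀ c d : ZMod ℓ, ∃ α ∈ I, S.phi α = !![c * r, c * s; d * r, d * s] := by
    refine ⟨S.phi α₀ i 0, S.phi α₀ i 1, ?_, ?_⟩
    · fin_cases j
      · exact Or.inl hij
      · exact Or.inr hij
    · intro c d
      obtain ⟨ξ, hξ, hξM⟩ := S.phi_surj (Matrix.of ![fun k => if k = i then c else 0,
        fun k => if k = i then d else 0])
      refine ⟨ξ * α₀, hmul _ hξ _ hα₀, ?_⟩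
      rw [S.phi_mul hξ (hIsub hα₀), hξM]
      ext a b
      fin_cases a <;> fin_cases b <;> fin_cases i <;>
        simp [Matrix.mul_apply]
  refine ⟨-s, r, ?_, ?_⟩
  · rcases hrs with h | h
    · exact Or.inr h
    · exact Or.inl (neg_ne_zero.2 h)
  · ext z
    constructor
    · intro hz
      -- The matrix formed by a row of the reduction of `z` and the row `(r, s)` is singular.
      have aux : ∀ k : Fin 2, S.phi z k 0 * s - S.phi z k 1 * r = 0 := by
        intro k
        obtain ⟨ξ, hξ, hξM⟩ := S.phi_surj (Matrix.of ![fun m => if m = k then 1 else 0,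
          fun _ => 0])
        obtain ⟨α, hα, hαM⟩ := hrow 0 1
        have h := hdet _ (I.add_mem (hmul _ hξ _ hz) hα)
        rw [S.phi_add (S.mul_mem hξ (hIsub hz)) (hIsub hα), S.phi_mul hξ (hIsub hz), hξM, hαM,
          Matrix.det_fin_two] at h
        fin_cases k <;> simpa [Matrix.vecMul, dotProduct, Fin.sum_univ_two] using h
      exact ⟨hIsub hz, by linear_combination -aux 0, by linear_combination -aux 1⟩
    · rintro ⟨hz, h1, h2⟩
      obtain ⟨c, d, hcd⟩ : ∃ c d, S.phi z = !![c * r, c * s; d * r, d * s] := by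
        rcases hrs with h | h
        · refine ⟨S.phi z 0 0 / r, S.phi z 1 0 / r, ?_⟩
          ext a b
          fin_cases a <;> fin_cases b <;> simp <;> field_simp
          · linear_combination h1
          · linear_combination h2
        · refine ⟨S.phi z 0 1 / s, S.phi z 1 1 / s, ?_⟩
          ext a b
          fin_cases a <;> fin_cases b <;> simp <;> field_simp
          · linear_combination -h1
          · linear_combination -h2
      obtain ⟨α, hα, hαM⟩ := hrow c d
      have h3 : z - α ∈ I := by
        apply hker
        · rw [sub_eq_add_neg]; exact add_mem hz (neg_mem (hIsub hα))
        · rw [sub_eq_add_neg, S.phi_add hz (neg_mem (hIsub hα)), S.phi_neg (hIsub hα), hcd, hαM,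
            add_neg_cancel]
      simpa using I.add_mem h3 hα

/-- The points `(1 : s)` and `(0 : 1)` of the projective line enumerate the ideals. -/
lemma ncard_S1 (S : Splitting ℓ p) [Fact ℓ.Prime] : (S1 p ℓ).ncard = ℓ + 1 := by
  let f : Option (ZMod ℓ) → AddSubgroup (H1 p) := fun o => o.elim (S.idl 0 1) (fun s => S.idl 1 s)
  have hf : Function.Injective f := by
    rintro (_ | s) (_ | t) h
    · rfl
    · have := (S.idl_eq_iff (by simp) (by simp)).1 h
      simp at this
    · have := (S.idl_eq_iff (by simp) (by simp)).1 h
      simp at this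
    · have := (S.idl_eq_iff (by simp) (by simp)).1 h
      simp at this
      rw [this]
  have hr : S1 p ℓ = Set.range f := by
    ext I
    constructor
    · intro hI
      obtain ⟨x, y, hxy, rfl⟩ := S.exists_eq_idl hI
      by_cases hx : x = 0
      · exact ⟨none, (S.idl_eq_iff (by simp) hxy).2 (by simp [hx])⟩
      · exact ⟨some (y / x), (S.idl_eq_iff (by simp) hxy).2 (by field_simp)⟩
    · rintro ⟨_ | s, rfl⟩
      · exact S.idl_mem (by simp)
      · exact S.idl_mem (by simp)
  rw [hr, ← Set.image_univ, Set.ncard_image_of_injective _ hf, Set.ncard_univ]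
  simp [Nat.card_eq_fintype_card, ZMod.card]

/-! ### Ideal classes -/

lemma exists_inv (hp : 0 < p) {μ : H1 p} (hμ : μ ≠ 0) :
    ∃ ν : H1 p, ν ≠ 0 ∧ μ * ν = 1 ∧ ν * μ = 1 := by
  have h := (nrd_pos hp hμ).ne'
  have h1 : μ * ((Nrd μ)⁻¹ • star μ) = 1 := by
    rw [mul_smul_comm, mul_star_eq]
    ext <;> simp [h]
  have h2 : ((Nrd μ)⁻¹ • star μ) * μ = 1 := by
    rw [smul_mul_assoc, star_mul_eq]
    ext <;> simp [h]
  refine ⟨(Nrd μ)⁻¹ • star μ, ?_, h1, h2⟩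
  intro h0
  rw [h0, mul_zero] at h1
  exact zero_ne_one h1

lemma sameClass_refl (I : AddSubgroup (H1 p)) : SameClass I I :=
  ⟨1, one_ne_zero, by simp⟩

lemma sameClass_symm (hp : 0 < p) {I J : AddSubgroup (H1 p)} (h : SameClass I J) :
    SameClass J I := by
  obtain ⟨μ, hμ, hJ⟩ := h
  obtain ⟨ν, hν, h1, -⟩ := exists_inv hp hμ
  refine ⟨ν, hν, ?_⟩
  rw [hJ, Set.image_image]
  simp [mul_assoc, h1]

lemma sameClass_trans (hp : 0 < p) {I J K : AddSubgroup (H1 p)} (h : SameClass I J)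
    (h' : SameClass J K) : SameClass I K := by
  obtain ⟨μ, hμ, hJ⟩ := h
  obtain ⟨ν, hν, hK⟩ := h'
  refine ⟨μ * ν, ?_, ?_⟩
  · intro h0
    obtain ⟨ρ, -, h1, -⟩ := exists_inv hp hν
    apply hμ
    have := congrArg (· * ρ) h0
    simpa [mul_assoc, h1] using this
  · rw [hK, hJ, Set.image_image]
    simp [mul_assoc]

/-- Two nonzero principal ideals are in the same class. -/
lemma sameClass_of_principal (hp : 0 < p) {I J : AddSubgroup (H1 p)} {z w : H1 p} (hz : z ∈ I)
    (hz0 : z ≠ 0) (hw : w ∈ J) (hw0 : w ≠ 0) (hI : IsPrincipalIdeal (O1728 p) I)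
    (hJ : IsPrincipalIdeal (O1728 p) J) : SameClass I J := by
  obtain ⟨α, -, hα⟩ := hI
  obtain ⟨β, -, hβ⟩ := hJ
  have hα0 : α ≠ 0 := by
    rintro rfl
    obtain ⟨x, -, hx⟩ : z ∈ (· * (0 : H1 p)) '' O1728 p := hα ▸ hz
    exact hz0 (by simpa using hx.symm)
  have hβ0 : β ≠ 0 := by
    rintro rfl
    obtain ⟨x, -, hx⟩ : w ∈ (· * (0 : H1 p)) '' O1728 p := hβ ▸ hw
    exact hw0 (by simpa using hx.symm)
  obtain ⟨ρ, -, h1, -⟩ := exists_inv hp hα0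
  have e : ∀ x : H1 p, x * α * (ρ * β) = x * β := by
    intro x
    rw [mul_assoc, ← mul_assoc α, h1, one_mul]
  refine ⟨ρ * β, ?_, ?_⟩
  · intro h0
    have := e 1
    rw [h0, mul_zero, one_mul] at this
    exact hβ0 this.symm
  · rw [hα, hβ, Set.image_image]
    simp only [e]

/-- If scaling by `q` keeps all norms of an ideal of norm `ℓ` divisible by `ℓ`, then `q` is an
integer, because the norms have greatest common divisor `ℓ`. -/
lemma den_eq_one {I : AddSubgroup (H1 p)} (hℓ : ℓ ≠ 0) (hI : HasReducedNorm I (ℓ : ℤ)) {q : ℚ}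
    (h : ∀ α ∈ I, IntDvd ℓ (Nrd α * q)) : q.den = 1 := by
  have hdvd : (ℓ : ℤ) * q.den ∣ (ℓ : ℤ) := by
    apply hI.2
    intro α hα
    obtain ⟨c, hc⟩ := hI.1 α hα
    obtain ⟨c', hc'⟩ := h α hα
    have hℓq : ((ℓ : ℤ) : ℚ) ≠ 0 := by exact_mod_cast hℓ
    have e1 : (c : ℚ) * q = c' := by
      apply mul_left_cancel₀ hℓq
      rw [← hc', hc]; ring
    have e2 : c * q.num = c' * q.den := by
      have : (c : ℚ) * q.num = c' * q.den := by
        rw [← e1, mul_assoc, Rat.mul_den_eq_num]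
      exact_mod_cast this
    have e3 : (q.den : ℤ) ∣ c := by
      have hcop : IsCoprime (q.den : ℤ) q.num := by
        rw [Int.isCoprime_iff_gcd_eq_one, Int.gcd_comm]
        exact q.reduced
      exact hcop.dvd_of_dvd_mul_right ⟨c', by rw [e2, mul_comm]⟩
    obtain ⟨k, rfl⟩ := e3
    exact ⟨k, by rw [hc]; push_cast; ring⟩
  obtain ⟨k, hk⟩ := hdvd
  have h1 : (1 : ℤ) = q.den * k := by
    apply mul_left_cancel₀ (show (ℓ : ℤ) ≠ 0 by exact_mod_cast hℓ)
    linear_combination hk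
  have h2 : (q.den : ℤ) ∣ 1 := ⟨k, h1⟩
  have h3 : q.den ∣ 1 := by exact_mod_cast h2
  exact Nat.dvd_one.1 h3

/-- A multiplier between two ideals of the same norm has norm `1`. -/
lemma nrd_eq_one (hp : 0 < p) {I J : AddSubgroup (H1 p)} (hℓ : ℓ ≠ 0)
    (hI : HasReducedNorm I (ℓ : ℤ)) (hJ : HasReducedNorm J (ℓ : ℤ)) {μ : H1 p} (hμ : μ ≠ 0)
    (h : (J : Set (H1 p)) = (· * μ) '' (I : Set (H1 p))) : Nrd μ = 1 := by
  have hpos := nrd_pos hp hμ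
  have d1 : (Nrd μ).den = 1 := by
    apply den_eq_one hℓ hI
    intro α hα
    rw [← nrd_mul]
    apply hJ.1
    have : α * μ ∈ (J : Set (H1 p)) := by rw [h]; exact ⟨α, hα, rfl⟩
    exact this
  have d2 : (Nrd μ)⁻¹.den = 1 := by
    apply den_eq_one hℓ hJ
    intro β hβ
    have hβ' : β ∈ (J : Set (H1 p)) := hβ
    rw [h] at hβ'
    obtain ⟨α, hα, rfl⟩ := hβ'
    simp only [nrd_mul]
    rw [mul_assoc, mul_inv_cancel₀ hpos.ne', mul_one]
    exact hI.1 α hα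
  rw [Rat.inv_def] at d2
  have e1 : Nrd μ = (Nrd μ).num := (Rat.den_eq_one_iff _).1 d1 |>.symm
  have e2 : (Nrd μ)⁻¹ = ((Nrd μ)⁻¹.num : ℚ) := ((Rat.den_eq_one_iff _).1 (by
    rw [Rat.inv_def]; exact d2)).symm
  have e3 : ((Nrd μ).num : ℚ) * ((Nrd μ)⁻¹.num : ℚ) = 1 := by
    rw [← e1, ← e2, mul_inv_cancel₀ hpos.ne']
  have e4 : (Nrd μ).num * (Nrd μ)⁻¹.num = 1 := by exact_mod_cast e3
  have e5 : (Nrd μ).num = 1 := by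
    rcases Int.eq_one_or_neg_one_of_mul_eq_one e4 with h | h
    · exact h
    · have := Rat.num_pos.2 hpos
      omega
  rw [e1, e5]; norm_num

/-- If `z * ν` lies in `ℓ O` for every `z` in `idl x y` and `ν = A + B i`, then the row `(-y, x)`
is killed by the reduction of `ν`. -/
lemma row_eq [Fact ℓ.Prime] {x y : ZMod ℓ} {A B : ℤ}
    (h : ∀ z ∈ S.idl x y, S.phi (z * omk p A B 0 0) = 0) :
    -y * A + x * B = 0 ∧ y * B + x * A = 0 := by
  obtain ⟨z, hz, hzM⟩ := S.phi_surj !![-y, x; 0, 0]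
  have hzI : z ∈ S.idl x y := ⟨hz, by simp [hzM]; ring, by simp [hzM]⟩
  have h0 := h z hzI
  rw [S.phi_mul hz (omk_mem _ _ _ _), hzM, phi_gauss] at h0
  have e0 := congrFun (congrFun h0 0) 0
  have e1 := congrFun (congrFun h0 0) 1
  simp [Matrix.mul_apply, Fin.sum_univ_two] at e0 e1
  exact ⟨by linear_combination e0, by linear_combination e1⟩

lemma natCast_mul_cancel {m : ℕ} (hm : m ≠ 0) {z w : H1 p}
    (h : (m : H1 p) * z = (m : H1 p) * w) : z = w := by
  have hq : (m : ℚ) ≠ 0 := by exact_mod_cast hm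
  have hsmul : (m : ℚ) • z = (m : ℚ) • w := by
    have e : ∀ z : H1 p, (m : ℚ) • z = (m : H1 p) * z := fun z => by ext <;> simp
    rw [e, e, h]
  exact smul_right_injective _ hq hsmul

/-- The possible ideals in the class of `idl x y`. A multiplier `μ` gives `ℓ μ ∈ O` of norm
`ℓ ^ 2`, hence in `ℤ[i]`. If `ℓ μ` is `ℓ` times a unit of `ℤ[i]`, then `(x' : y')` is `(x : y)` or
its quarter turn; otherwise its reduction has rank one and determines both points. -/
lemma sameClass_cases [Fact ℓ.Prime] (hp : 0 < p) (hpl : 4 * ℓ ^ 2 < p) {x y x' y' : ZMod ℓ}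
    (hxy : x ≠ 0 ∨ y ≠ 0) (hxy' : x' ≠ 0 ∨ y' ≠ 0)
    (h : SameClass (S.idl x y) (S.idl x' y')) :
    x * y' = y * x' ∨ x * x' + y * y' = 0 ∨ (x ^ 2 + y ^ 2 = 0 ∧ x * y' + y * x' = 0) := by
  have hℓ : ℓ.Prime := Fact.out
  have hℓ0 : (ℓ : ℤ) ≠ 0 := by exact_mod_cast hℓ.ne_zero
  have hI := S.idl_mem hxy
  have hJ := S.idl_mem hxy'
  obtain ⟨μ, hμ, hμJ⟩ := h
  have hN : Nrd μ = 1 := nrd_eq_one hp hℓ.ne_zero hI.2 hJ.2 hμ hμJ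
  have toJ : ∀ z ∈ S.idl x y, z * μ ∈ S.idl x' y' := by
    intro z hz
    have : z * μ ∈ (S.idl x' y' : Set (H1 p)) := by rw [hμJ]; exact ⟨z, hz, rfl⟩
    exact this
  have toI : ∀ w ∈ S.idl x' y', w * star μ ∈ S.idl x y := by
    intro w hw
    have hw' : w ∈ (S.idl x' y' : Set (H1 p)) := hw
    rw [hμJ] at hw'
    obtain ⟨z, hz, rfl⟩ := hw'
    have e : z * μ * star μ = z := by
      rw [mul_assoc, mul_star_eq, hN]
      ext <;> simp
    simp only [e]
    exact hz
  have hνO : (ℓ : H1 p) * μ ∈ O1728 p := (toJ _ (S.natCast_mem_of_mem_S1 hI)).1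
  obtain ⟨A, B, hν⟩ : ∃ A B : ℤ, (ℓ : H1 p) * μ = omk p A B 0 0 := by
    apply short_mem hpl hνO
    rw [nrd_mul, hN, natCast_eq_omk, nrd_omk S.hn]
    push_cast
    apply le_of_eq
    ring
  have hAB : A ^ 2 + B ^ 2 = (ℓ : ℤ) ^ 2 := by
    have e := congrArg Nrd hν
    rw [nrd_mul, hN, natCast_eq_omk, nrd_omk S.hn, nrd_omk S.hn, mul_one] at e
    have e' := Int.cast_injective (α := ℚ) e
    linear_combination -e'
  have hν' : (ℓ : H1 p) * star μ = omk p A (-B) 0 0 := by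
    have e := congrArg star hν
    rw [omk_star, star_mul, star_natCast, ← Nat.cast_comm] at e
    simpa using e
  obtain ⟨r1, r2⟩ : -y * A + x * B = 0 ∧ y * B + x * A = 0 := by
    apply S.row_eq
    intro z hz
    rw [← hν, ← mul_assoc, ← Nat.cast_comm, mul_assoc]
    exact S.phi_natCast_mul (toJ z hz).1
  obtain ⟨s1, s2⟩ : -y' * A + x' * ((-B : ℤ) : ZMod ℓ) = 0 ∧
      y' * ((-B : ℤ) : ZMod ℓ) + x' * A = 0 := by
    apply S.row_eq
    intro z hz
    rw [← hν', ← mul_assoc, ← Nat.cast_comm, mul_assoc]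
    exact S.phi_natCast_mul (toI z hz).1
  push_cast at s1 s2
  by_cases hA : (A : ZMod ℓ) = 0
  · have hB : (B : ZMod ℓ) = 0 := by
      have e := congrArg (Int.cast : ℤ → ZMod ℓ) hAB
      simpa [hA] using e
    rw [ZMod.intCast_zmod_eq_zero_iff_dvd] at hA hB
    obtain ⟨A', rfl⟩ := hA
    obtain ⟨B', rfl⟩ := hB
    have hAB' : A' ^ 2 + B' ^ 2 = 1 := by
      apply mul_left_cancel₀ (pow_ne_zero 2 hℓ0)
      linear_combination hAB
    have hμ' : μ = omk p A' B' 0 0 := by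
      apply natCast_mul_cancel hℓ.ne_zero
      rw [hν, natCast_mul_omk]
      simp
    obtain ⟨z, hz, hzM⟩ := S.phi_surj !![-y, x; 0, 0]
    have hzI : z ∈ S.idl x y := ⟨hz, by simp [hzM]; ring, by simp [hzM]⟩
    have e := (toJ z hzI).2.1
    rw [hμ', S.phi_mul hz (omk_mem _ _ _ _), hzM, phi_gauss] at e
    simp [Matrix.mul_apply, Fin.sum_univ_two] at e
    have hcases : B' = 0 ∧ (A' = 1 ∨ A' = -1) ∨ A' = 0 ∧ (B' = 1 ∨ B' = -1) := by
      clear * - hAB'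
      have b1 : A' ≤ 1 := by nlinarith [sq_nonneg B']
      have b2 : -1 ≤ A' := by nlinarith [sq_nonneg B']
      have b3 : B' ≤ 1 := by nlinarith [sq_nonneg A']
      have b4 : -1 ≤ B' := by nlinarith [sq_nonneg A']
      interval_cases A' <;> interval_cases B' <;> simp_all
    rcases hcases with ⟨rfl, rfl | rfl⟩ | ⟨rfl, rfl | rfl⟩
    · left; push_cast at e; linear_combination e
    · left; push_cast at e; linear_combination -e
    · right; left; push_cast at e; linear_combination e
    · right; left; push_cast at e; linear_combination -e
  · right; right
    constructor
    · apply (mul_eq_zero.1 (?_ : (A : ZMod ℓ) * _ = 0)).resolve_left hA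
      linear_combination x * r2 - y * r1
    · apply (mul_eq_zero.1 (?_ : (A : ZMod ℓ) * _ = 0)).resolve_left hA
      linear_combination -(x' * r1) - x * s1

/-- Right multiplication by `i` acts on the projective line as a quarter turn. -/
lemma sameClass_qi [Fact ℓ.Prime] {x y : ZMod ℓ} (hxy : x ≠ 0 ∨ y ≠ 0) :
    SameClass (S.idl x y) (S.idl (-y) x) := by
  have key : ∀ x y : ZMod ℓ, ∀ z ∈ S.idl x y, z * qi p ∈ S.idl (-y) x := by
    rintro x y z ⟨hz, h1, h2⟩
    refine ⟨S.mul_mem hz (qi_mem p), ?_, ?_⟩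
    · rw [S.phi_mul hz (qi_mem p), qi_eq_omk, phi_gauss]
      simp [Matrix.mul_apply, Fin.sum_univ_two]
      linear_combination -h1
    · rw [S.phi_mul hz (qi_mem p), qi_eq_omk, phi_gauss]
      simp [Matrix.mul_apply, Fin.sum_univ_two]
      linear_combination -h2
  have hii : qi p * qi p = -1 := by ext <;> simp [qi]
  refine ⟨qi p, ?_, ?_⟩
  · intro h
    have := congrArg QuaternionAlgebra.imI h
    simp [qi] at this
  · ext z
    constructor
    · intro hz
      refine ⟨-(z * qi p), ?_, ?_⟩
      · have h := (S.idl _ _).neg_mem (key _ _ z hz)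
        have e : S.idl (-x) (-y) = S.idl x y :=
          (S.idl_eq_iff (by simpa using hxy) hxy).2 (by ring)
        rw [e] at h
        exact h
      · simp [mul_assoc, hii]
    · rintro ⟨w, hw, rfl⟩
      exact key _ _ w hw

/-! ### Principal ideals -/

lemma cast_ne_zero [Fact ℓ.Prime] {A B : ℤ} (h : A ^ 2 + B ^ 2 = ℓ) : (A : ZMod ℓ) ≠ 0 := by
  intro hA
  have hℓ : ℓ.Prime := Fact.out
  have hB : (B : ZMod ℓ) = 0 := by
    have e := congrArg (Int.cast : ℤ → ZMod ℓ) h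
    simpa [hA] using e
  rw [ZMod.intCast_zmod_eq_zero_iff_dvd] at hA hB
  obtain ⟨A', rfl⟩ := hA
  obtain ⟨B', rfl⟩ := hB
  have h' : (ℓ : ℤ) * ((ℓ : ℤ) * (A' ^ 2 + B' ^ 2)) = ℓ * 1 := by linear_combination h
  have h'' := mul_left_cancel₀ (by exact_mod_cast hℓ.ne_zero) h'
  have : (ℓ : ℤ) ∣ 1 := ⟨_, h''.symm⟩
  have : ℓ ∣ 1 := by exact_mod_cast this
  exact hℓ.one_lt.ne' (Nat.dvd_one.1 this)

/-- An element `A + B i` of norm `ℓ` generates the annihilator of `(B : A)`. -/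
lemma principal_of_sum_sq [Fact ℓ.Prime] {A B : ℤ} (h : A ^ 2 + B ^ 2 = ℓ) :
    IsPrincipalIdeal (O1728 p) (S.idl B A) := by
  have hℓ : ℓ.Prime := Fact.out
  have hA := cast_ne_zero h
  have hmod : (A : ZMod ℓ) ^ 2 + B ^ 2 = 0 := by
    have e := congrArg (Int.cast : ℤ → ZMod ℓ) h
    simpa using e
  have hI := S.idl_mem (x := B) (y := A) (Or.inr hA)
  have hπ : omk p A B 0 0 ∈ S.idl (B : ZMod ℓ) (A : ZMod ℓ) := by
    refine ⟨omk_mem _ _ _ _, ?_, ?_⟩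
    · rw [phi_gauss]; simp; ring
    · rw [phi_gauss]; simp; linear_combination hmod
  refine ⟨omk p A B 0 0, omk_mem _ _ _ _, ?_⟩
  ext z
  constructor
  · intro hz
    have hz1 : z ∈ S.idl (B : ZMod ℓ) (A : ZMod ℓ) := hz
    have hz2 := hz1
    rw [S.idl_eq_iff (x' := A) (y' := -B) (Or.inr hA) (Or.inl hA) |>.2
      (by linear_combination -hmod)] at hz2
    obtain ⟨hzO, a1, a2⟩ := hz1
    obtain ⟨-, b1, b2⟩ := hz2
    have h0 : S.phi (z * omk p A (-B) 0 0) = 0 := by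
      rw [S.phi_mul hzO (omk_mem _ _ _ _), phi_gauss]
      ext i j
      fin_cases i <;> fin_cases j <;> simp [Matrix.mul_apply, Fin.sum_univ_two]
      · linear_combination b1
      · linear_combination a1
      · linear_combination b2
      · linear_combination a2
    obtain ⟨y, hy, hyz⟩ := S.ker_phi (S.mul_mem hzO (omk_mem _ _ _ _)) h0
    refine ⟨y, hy, ?_⟩
    apply natCast_mul_cancel hℓ.ne_zero
    have e : omk p A (-B) 0 0 * omk p A B 0 0 = (ℓ : H1 p) := by
      rw [omk_mul S.hn, natCast_eq_omk, ← h]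
      congr 1 <;> ring
    simp only
    rw [← mul_assoc, ← hyz, mul_assoc, e, Nat.cast_comm]
  · rintro ⟨y, hy, rfl⟩
    exact hI.1.2 y hy _ hπ

/-- An isotropic point exists only if `ℓ` is a sum of two squares `A ^ 2 + B ^ 2`, and then it is
`(B : A)` or `(-B : A)`. -/
lemma principal_of_isotropic [Fact ℓ.Prime] {x y : ZMod ℓ} (hxy : x ≠ 0 ∨ y ≠ 0)
    (h : x ^ 2 + y ^ 2 = 0) : IsPrincipalIdeal (O1728 p) (S.idl x y) := by
  have hx : x ≠ 0 := by
    rintro rfl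
    simp at h
    tauto
  have h4 : ℓ % 4 ≠ 3 :=
    ZMod.mod_four_ne_three_of_sq_eq_neg_sq' hx (x := y) (by linear_combination h)
  obtain ⟨A, B, hAB⟩ := Nat.Prime.sq_add_sq h4
  have hAB' : (A : ℤ) ^ 2 + (B : ℤ) ^ 2 = ℓ := by exact_mod_cast hAB
  have hmod : (A : ZMod ℓ) ^ 2 + (B : ZMod ℓ) ^ 2 = 0 := by
    have e := congrArg (Int.cast : ℤ → ZMod ℓ) hAB'
    simpa using e
  have hprod : (x * A - y * B) * (x * A + y * B) = 0 := by
    linear_combination x ^ 2 * hmod - B ^ 2 * h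
  rcases mul_eq_zero.1 hprod with h' | h'
  · rw [(S.idl_eq_iff (x' := ((B : ℤ) : ZMod ℓ)) (y' := ((A : ℤ) : ZMod ℓ)) hxy
      (Or.inr (cast_ne_zero hAB'))).2 (by push_cast; linear_combination h')]
    exact S.principal_of_sum_sq hAB'
  · have hABneg : (A : ℤ) ^ 2 + (-B : ℤ) ^ 2 = ℓ := by rw [neg_sq]; exact hAB'
    rw [(S.idl_eq_iff (x' := ((-B : ℤ) : ZMod ℓ)) (y' := ((A : ℤ) : ZMod ℓ)) hxy
      (Or.inr (cast_ne_zero hAB'))).2 (by push_cast; linear_combination h')]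
    exact S.principal_of_sum_sq hABneg

/-- A generator has norm `ℓ`, hence lies in `ℤ[i]`, and this forces the point to be isotropic. -/
lemma isotropic_of_principal [Fact ℓ.Prime] (hpl : 4 * ℓ ^ 2 < p) {x y : ZMod ℓ}
    (hxy : x ≠ 0 ∨ y ≠ 0) (h : IsPrincipalIdeal (O1728 p) (S.idl x y)) : x ^ 2 + y ^ 2 = 0 := by
  have hℓ : ℓ.Prime := Fact.out
  have hI := S.idl_mem hxy
  obtain ⟨α, hα, hIα⟩ := h
  have hαI : α ∈ S.idl x y := by
    have : α ∈ (S.idl x y : Set (H1 p)) := by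
      rw [hIα]; exact ⟨1, one_mem p, one_mul α⟩
    exact this
  obtain ⟨N, hN, -⟩ := S.det_phi hα
  have hNℓ : N = ℓ := by
    have d1 : (ℓ : ℤ) ∣ N := by
      rw [← intDvd_cast, ← hN]; exact hI.2.1 α hαI
    have d2 : N ∣ (ℓ : ℤ) := by
      apply hI.2.2
      intro β hβ
      have hβ' : β ∈ (S.idl x y : Set (H1 p)) := hβ
      rw [hIα] at hβ'
      obtain ⟨z, hz, rfl⟩ := hβ'
      obtain ⟨M, hM, -⟩ := S.det_phi hz
      simp only [nrd_mul, hM, hN]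
      exact ⟨M, mul_comm _ _⟩
    have hN0 : 0 ≤ N := by
      have : (0 : ℚ) ≤ N := by rw [← hN, nrd_eq]; positivity
      exact_mod_cast this
    exact Int.dvd_antisymm hN0 (by positivity) d2 d1
  obtain ⟨A, B, rfl⟩ : ∃ A B : ℤ, α = omk p A B 0 0 := by
    apply short_mem hpl hα
    rw [hN, hNℓ]
    have : (1 : ℚ) ≤ ℓ := by exact_mod_cast hℓ.one_le
    push_cast
    nlinarith
  have hAB : A ^ 2 + B ^ 2 = ℓ := by
    rw [nrd_omk S.hn] at hN
    have := Int.cast_injective (α := ℚ) hN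
    rw [hNℓ] at this
    linear_combination this
  have hA := cast_ne_zero hAB
  obtain ⟨-, e1, e2⟩ := hαI
  rw [phi_gauss] at e1 e2
  simp at e1 e2
  apply (mul_eq_zero.1 (?_ : (A : ZMod ℓ) * _ = 0)).resolve_left hA
  linear_combination x * e1 + y * e2

/-! ### Counting -/

/-- The class of the annihilator of an isotropic point consists of the two principal ideals; that
of any other point consists of the point and its quarter turn. -/
lemma ncard_class (S : Splitting ℓ p) [Fact ℓ.Prime] (hp : 0 < p) (hpl : 4 * ℓ ^ 2 < p)
    {I : AddSubgroup (H1 p)} (hI : I ∈ S1 p ℓ) : {J ∈ S1 p ℓ | SameClass I J}.ncard = 2 := by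
  have hℓ : ℓ.Prime := Fact.out
  obtain ⟨x, y, hxy, rfl⟩ := S.exists_eq_idl hI
  have h2 : (2 : ZMod ℓ) ≠ 0 := fun h => by simpa [h] using S.h2
  by_cases h : x ^ 2 + y ^ 2 = 0
  · have hx : x ≠ 0 := by
      rintro rfl
      simp at h
      tauto
    have hy : y ≠ 0 := by
      rintro rfl
      simp at h
      tauto
    have e : {J ∈ S1 p ℓ | SameClass (S.idl x y) J} = {S.idl x y, S.idl x (-y)} := by
      ext J
      constructor
      · rintro ⟨hJ, hIJ⟩
        obtain ⟨x', y', hxy', rfl⟩ := S.exists_eq_idl hJ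
        have hc : x * y' = y * x' ∨ x * y' + y * x' = 0 := by
          rcases S.sameClass_cases hp hpl hxy hxy' hIJ with h' | h' | ⟨-, h'⟩
          · exact Or.inl h'
          · left
            apply mul_left_cancel₀ hy
            linear_combination x * h' - x' * h
          · exact Or.inr h'
        rcases hc with h' | h'
        · exact Or.inl ((S.idl_eq_iff hxy' hxy).2 (by linear_combination -h'))
        · exact Or.inr ((S.idl_eq_iff hxy' (Or.inl hx)).2 (by linear_combination -h'))
      · rintro (rfl | rfl)
        · exact ⟨hI, sameClass_refl _⟩
        · have hJ := S.idl_mem (x := x) (y := -y) (Or.inl hx)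
          have hℓ0 : (ℓ : H1 p) ≠ 0 := by
            intro h0
            have := congrArg QuaternionAlgebra.re h0
            simp [hℓ.ne_zero] at this
          exact ⟨hJ, sameClass_of_principal hp (S.natCast_mem_of_mem_S1 hI) hℓ0
            (S.natCast_mem_of_mem_S1 hJ) hℓ0 (S.principal_of_isotropic hxy h)
            (S.principal_of_isotropic (Or.inl hx) (by rw [neg_sq]; exact h))⟩
    rw [e, Set.ncard_pair]
    rw [Ne, S.idl_eq_iff hxy (Or.inl hx)]
    intro h'
    have : 2 * (x * y) = 0 := by linear_combination -h'
    simp_all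
  · have hyx : -y ≠ 0 ∨ x ≠ 0 := by
      rcases hxy with h | h
      · exact Or.inr h
      · exact Or.inl (neg_ne_zero.2 h)
    have e : {J ∈ S1 p ℓ | SameClass (S.idl x y) J} = {S.idl x y, S.idl (-y) x} := by
      ext J
      constructor
      · rintro ⟨hJ, hIJ⟩
        obtain ⟨x', y', hxy', rfl⟩ := S.exists_eq_idl hJ
        rcases S.sameClass_cases hp hpl hxy hxy' hIJ with h' | h' | ⟨h', -⟩
        · exact Or.inl ((S.idl_eq_iff hxy' hxy).2 (by linear_combination -h'))
        · exact Or.inr ((S.idl_eq_iff hxy' hyx).2 (by linear_combination h'))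
        · exact absurd h' h
      · rintro (rfl | rfl)
        · exact ⟨hI, sameClass_refl _⟩
        · exact ⟨S.idl_mem hyx, S.sameClass_qi hxy⟩
    rw [e, Set.ncard_pair]
    rw [Ne, S.idl_eq_iff hxy hyx]
    intro h'
    exact h (by linear_combination h')

end Splitting

/-- The number of classes of an equivalence relation whose classes all have two elements. -/
lemma ncard_classes {α : Type*} {s : Set α} (hs : s.Finite) {r : α → α → Prop}
    (hrefl : ∀ a, r a a) (hsymm : ∀ {a b}, r a b → r b a)
    (htrans : ∀ {a b c}, r a b → r b c → r a c) (h2 : ∀ a ∈ s, {b ∈ s | r a b}.ncard = 2) :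
    2 * {C : Set α | ∃ a ∈ s, C = {b ∈ s | r a b}}.ncard = s.ncard := by
  classical
  lift s to Finset α using hs
  let c : α → Set α := fun a => {b | b ∈ s ∧ r a b}
  have e : {C : Set α | ∃ a ∈ (s : Set α), C = {b ∈ (s : Set α) | r a b}} =
      ((s.image c : Finset (Set α)) : Set (Set α)) := by
    ext C
    simp only [Finset.coe_image, Set.mem_image]
    constructor
    · rintro ⟨a, ha, rfl⟩; exact ⟨a, ha, rfl⟩
    · rintro ⟨a, ha, rfl⟩; exact ⟨a, ha, rfl⟩
  rw [e, Set.ncard_coe_finset, Set.ncard_coe_finset, Finset.card_eq_sum_card_image c s,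
    Finset.sum_const_nat (m := 2), mul_comm]
  intro C hC
  obtain ⟨a, ha, rfl⟩ := Finset.mem_image.1 hC
  rw [← h2 a ha, ← Set.ncard_coe_finset]
  congr 1
  ext b
  simp only [Finset.coe_filter]
  constructor
  · rintro ⟨hb, hbc⟩
    refine ⟨hb, ?_⟩
    have : b ∈ c b := ⟨hb, hrefl b⟩
    rw [hbc] at this
    exact this.2
  · rintro ⟨hb, hab⟩
    refine ⟨hb, ?_⟩
    ext d
    exact ⟨fun hd => ⟨hd.1, htrans hab hd.2⟩, fun hd => ⟨hd.1, htrans (hsymm hab) hd.2⟩⟩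

/-- The image of `j` is found by writing an element of `𝔽_ℓ` as a sum of two squares. -/
lemma exists_splitting {ℓ p : ℕ} (hℓ : ℓ.Prime) (hℓ3 : 3 < ℓ) (hp : p.Prime) (hp4 : p % 4 = 3)
    (hpl : 4 * ℓ ^ 2 < p) : Nonempty (Splitting ℓ p) := by
  have : Fact ℓ.Prime := ⟨hℓ⟩
  have h2 : (2 : ZMod ℓ) ≠ 0 := by
    intro h
    have h' : ((2 : ℕ) : ZMod ℓ) = 0 := by exact_mod_cast h
    rw [ZMod.natCast_eq_zero_iff] at h'
    have := Nat.le_of_dvd (by norm_num) h'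
    omega
  have hp0 : (p : ZMod ℓ) ≠ 0 := by
    intro h
    rw [ZMod.natCast_eq_zero_iff] at h
    have := (Nat.prime_dvd_prime_iff_eq hℓ hp).1 h
    subst this
    nlinarith
  obtain ⟨n, hn⟩ : ∃ n : ℤ, (p : ℤ) + 1 = 4 * n := ⟨((p : ℤ) + 1) / 4, by omega⟩
  obtain ⟨a, b, hab⟩ := ZMod.sq_add_sq ℓ (((2 : ZMod ℓ)⁻¹) ^ 2 - n)
  have hn' : (p : ZMod ℓ) + 1 = 4 * n := by
    have := congrArg (Int.cast : ℤ → ZMod ℓ) hn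
    push_cast at this; exact this
  have hh : 2 * (2 : ZMod ℓ)⁻¹ = 1 := mul_inv_cancel₀ h2
  refine ⟨⟨n, a, b, 2⁻¹, hn, hh, hab, ?_, hp0⟩⟩
  intro h0
  apply hp0
  rw [hab] at h0
  linear_combination hn' - 4 * h0 + (2 * (2 : ZMod ℓ)⁻¹ + 1) * hh

/-- for primes `ℓ > 3` and `p ≡ 3 (mod 4)` with `p > 4ℓ²`, there are
exactly `ℓ+1` left `O`-ideals of reduced norm `ℓ`, falling into exactly `(ℓ+1)/2`
left ideal classes of `2` ideals each; moreover some such ideal is principal iff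
`ℓ ≡ 1 (mod 4)`, in which case exactly two are principal, lying in one class. -/
theorem stmt16 (ℓ p : ℕ) (hℓ : ℓ.Prime) (hℓ3 : 3 < ℓ) (hp : p.Prime)
    (hp4 : p % 4 = 3) (hpl : 4 * ℓ ^ 2 < p) :
    (S1 p ℓ).ncard = ℓ + 1 ∧
    {C : Set (AddSubgroup (H1 p)) | ∃ I ∈ S1 p ℓ,
        C = {J ∈ S1 p ℓ | SameClass I J}}.ncard = (ℓ + 1) / 2 ∧
    (∀ I ∈ S1 p ℓ, {J ∈ S1 p ℓ | SameClass I J}.ncard = 2) ∧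
    ((∃ I ∈ S1 p ℓ, IsPrincipalIdeal (O1728 p) I) ↔ ℓ % 4 = 1) ∧
    (ℓ % 4 = 1 →
      {I ∈ S1 p ℓ | IsPrincipalIdeal (O1728 p) I}.ncard = 2 ∧
      ∀ I ∈ S1 p ℓ, ∀ J ∈ S1 p ℓ, IsPrincipalIdeal (O1728 p) I →
        IsPrincipalIdeal (O1728 p) J → SameClass I J) := by
  have : Fact ℓ.Prime := ⟨hℓ⟩
  obtain ⟨S⟩ := exists_splitting hℓ hℓ3 hp hp4 hpl
  have hcard := S.ncard_S1
  have hclass : ∀ I ∈ S1 p ℓ, {J ∈ S1 p ℓ | SameClass I J}.ncard = 2 :=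
    fun I hI => S.ncard_class hp.pos hpl hI
  have hodd : ℓ % 2 = 1 := hℓ.eq_two_or_odd.resolve_left (by omega)
  have h2 : (2 : ZMod ℓ) ≠ 0 := fun h => by simpa [h] using S.h2
  have hℓ0 : (ℓ : H1 p) ≠ 0 := by
    intro h0
    have := congrArg QuaternionAlgebra.re h0
    simp [hℓ.ne_zero] at this
  have hsqrt : ℓ % 4 = 1 → ∃ s : ZMod ℓ, s ^ 2 = -1 := by
    intro h
    obtain ⟨s, hs⟩ := ZMod.exists_sq_eq_neg_one_iff.2 (show ℓ % 4 ≠ 3 by omega)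
    exact ⟨s, by rw [hs, sq]⟩
  refine ⟨hcard, ?_, hclass, ⟨?_, ?_⟩, ?_⟩
  · have hfin : (S1 p ℓ).Finite := Set.finite_of_ncard_ne_zero (by omega)
    have h := ncard_classes hfin (r := SameClass) Splitting.sameClass_refl
      (Splitting.sameClass_symm hp.pos) (Splitting.sameClass_trans hp.pos) hclass
    omega
  · rintro ⟨I, hI, hprin⟩
    obtain ⟨x, y, hxy, rfl⟩ := S.exists_eq_idl hI
    have h := S.isotropic_of_principal hpl hxy hprin
    have hx : x ≠ 0 := by
      rintro rfl
      simp at h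
      tauto
    have h4 : ℓ % 4 ≠ 3 :=
      ZMod.mod_four_ne_three_of_sq_eq_neg_sq' hx (x := y) (by linear_combination h)
    omega
  · intro h
    obtain ⟨s, hs⟩ := hsqrt h
    exact ⟨S.idl 1 s, S.idl_mem (by simp), S.principal_of_isotropic (by simp) (by simp [hs])⟩
  · intro h
    obtain ⟨s, hs⟩ := hsqrt h
    refine ⟨?_, fun I hI J hJ hIp hJp => Splitting.sameClass_of_principal hp.pos
      (S.natCast_mem_of_mem_S1 hI) hℓ0 (S.natCast_mem_of_mem_S1 hJ) hℓ0 hIp hJp⟩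
    have e : {I ∈ S1 p ℓ | IsPrincipalIdeal (O1728 p) I} = {S.idl 1 s, S.idl 1 (-s)} := by
      ext I
      constructor
      · rintro ⟨hI, hprin⟩
        obtain ⟨x, y, hxy, rfl⟩ := S.exists_eq_idl hI
        have h := S.isotropic_of_principal hpl hxy hprin
        have hprod : (y - s * x) * (y + s * x) = 0 := by linear_combination h - x ^ 2 * hs
        rcases mul_eq_zero.1 hprod with h' | h'
        · exact Or.inl ((S.idl_eq_iff hxy (by simp)).2 (by linear_combination -h'))
        · exact Or.inr ((S.idl_eq_iff hxy (by simp)).2 (by linear_combination -h'))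
      · rintro (rfl | rfl)
        · exact ⟨S.idl_mem (by simp), S.principal_of_isotropic (by simp) (by simp [hs])⟩
        · exact ⟨S.idl_mem (by simp), S.principal_of_isotropic (by simp) (by simp [hs])⟩
    rw [e, Set.ncard_pair]
    rw [Ne, S.idl_eq_iff (by simp) (by simp)]
    intro h'
    have hs0 : 2 * s = 0 := by linear_combination -h'
    rcases mul_eq_zero.1 hs0 with h'' | h''
    · exact h2 h''
    · rw [h''] at hs
      simp at hs
end
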